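/- arXiv:2502.20328 — 6 statements merged into one kernel-verified Lean document; each statement's English description precedes it below -/
import Mathlib

section
/- For every β > 0 and every s ∈ ℝ with s ≠ 0, the improper integral ∫₀^∞ r·cos(r s)/(e^{β r} − 1) dr converges and equals 1/(2s²) − (π²/(2β²))·(1/sinh²(π s/β)). -/
open MeasureTheory Real Set

lemma aux_norm (a : ℂ) (t : ℝ) : ‖Complex.exp (-a * t)‖ = Real.exp (-a.re * t) := by
  rw [Complex.norm_exp]; simp

lemma aux_int_real {b : ℝ} (hb : 0 < b) :
    IntegrableOn (fun t : ℝ => t * Real.exp (-b * t)) (Ioi 0) := by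
  have := integrableOn_rpow_mul_exp_neg_mul_rpow (p := 1) (s := 1) (b := b)
    (by norm_num) (by norm_num) hb
  simpa using this

lemma aux_val_real {b : ℝ} (hb : 0 < b) :
    ∫ t in Ioi (0:ℝ), t * Real.exp (-b * t) = 1 / b ^ 2 := by
  have := Real.integral_rpow_mul_exp_neg_mul_Ioi (a := 2) (r := b) (by norm_num) hb
  norm_num at this
  simpa [Real.Gamma_two] using this

lemma aux_int {a : ℂ} (ha : 0 < a.re) :
    IntegrableOn (fun t : ℝ => (t : ℂ) * Complex.exp (-a * t)) (Ioi 0) := by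
  refine (aux_int_real ha).mono' (by fun_prop) ?_
  filter_upwards [ae_restrict_mem measurableSet_Ioi] with t ht
  rw [norm_mul, aux_norm, Complex.norm_real, Real.norm_of_nonneg (le_of_lt ht)]

lemma aux_val {a : ℂ} (ha : 0 < a.re) :
    ∫ t in Ioi (0:ℝ), (t : ℂ) * Complex.exp (-a * t) = 1 / a ^ 2 := by
  have ha0 : a ≠ 0 := by rintro rfl; simp at ha
  have hd : ∀ t : ℝ, HasDerivAt (fun t : ℝ => -((t : ℂ) / a + 1 / a ^ 2) * Complex.exp (-a * t))
      ((t : ℂ) * Complex.exp (-a * t)) t := by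
    intro t
    have h1 : HasDerivAt (fun z : ℂ => -(z / a + 1 / a ^ 2) * Complex.exp (-a * z))
      ((t : ℂ) * Complex.exp (-a * t)) (t : ℂ) := by
      have h2 := (((hasDerivAt_id (t : ℂ)).div_const a).add_const (1 / a ^ 2)).neg
      have h3 := ((hasDerivAt_id (t : ℂ)).const_mul (-a)).cexp
      refine (h2.mul h3).congr_deriv ?_
      have h4 : (a * a⁻¹) = 1 := mul_inv_cancel₀ ha0
      simp only [id, Pi.neg_apply, div_eq_mul_inv, one_mul, mul_one, ← inv_pow]
      linear_combination ((t : ℂ) + a⁻¹) * Complex.exp (-a * t) * h4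
    exact h1.comp_ofReal
  have hlim : Filter.Tendsto (fun t : ℝ => -((t : ℂ) / a + 1 / a ^ 2) * Complex.exp (-a * t))
      Filter.atTop (nhds 0) := by
    have e1 : Filter.Tendsto (fun t : ℝ => Complex.exp (-a * t)) Filter.atTop (nhds 0) := by
      rw [tendsto_zero_iff_norm_tendsto_zero]
      simp_rw [aux_norm]
      have := tendsto_rpow_mul_exp_neg_mul_atTop_nhds_zero 0 a.re ha
      simpa using this
    have e2 : Filter.Tendsto (fun t : ℝ => (t : ℂ) * Complex.exp (-a * t))
        Filter.atTop (nhds 0) := by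
      rw [tendsto_zero_iff_norm_tendsto_zero]
      simp_rw [norm_mul, aux_norm]
      have := tendsto_rpow_mul_exp_neg_mul_atTop_nhds_zero 1 a.re ha
      refine this.congr' ?_
      filter_upwards [Filter.eventually_ge_atTop 0] with t ht
      rw [Complex.norm_real, Real.norm_of_nonneg ht, Real.rpow_one]
    have := (e2.const_mul (-1 / a)).add (e1.const_mul (-1 / a ^ 2))
    simp only [mul_zero, add_zero] at this
    refine this.congr fun t => ?_
    ring
  have := integral_Ioi_of_hasDerivAt_of_tendsto' (a := 0) (fun t _ => hd t) (aux_int ha) hlim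
  rw [this]
  simp

lemma aux_lower {β r : ℝ} (hβ : 0 < β) (hr : 0 < r) :
    r / (Real.exp (β * r) - 1) ≤ (1 / β) * Real.exp (-(β / 2) * r) := by
  have h0 : 0 < β * r := by positivity
  have hp : 0 < Real.exp (β * r) - 1 := by
    have := Real.add_one_lt_exp h0.ne'
    linarith
  have hsinh := Real.self_le_sinh_iff.2 (show 0 ≤ β * r / 2 by positivity)
  rw [Real.sinh_eq] at hsinh
  have e1 : Real.exp (β * r) = Real.exp (β * r / 2) * Real.exp (β * r / 2) := by
    rw [← Real.exp_add]; ring_nf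
  have e2 : Real.exp (β * r / 2) * Real.exp (-(β * r / 2)) = 1 := by
    rw [← Real.exp_add]; simp
  have e3 : -(β / 2) * r = -(β * r / 2) := by ring
  rw [div_le_iff₀ hp, e3, e1, one_div, mul_assoc, le_inv_mul_iff₀ hβ]
  have : Real.exp (-(β * r / 2)) * (Real.exp (β * r / 2) * Real.exp (β * r / 2) - 1)
    = Real.exp (β * r / 2) - Real.exp (-(β * r / 2)) := by
    linear_combination (Real.exp (β * r / 2)) * e2
  rw [this]
  linarith

lemma aux_J_int {β : ℝ} (s : ℝ) (hβ : 0 < β) :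
    IntegrableOn (fun r : ℝ => (r : ℂ) * Complex.exp (Complex.I * s * r) /
      (Complex.exp (β * r) - 1)) (Ioi 0) := by
  have h := (integrableOn_exp_mul_Ioi (a := -(β / 2)) (by linarith) 0).const_mul (1 / β)
  refine h.mono' (Measurable.aestronglyMeasurable (by fun_prop)) ?_
  filter_upwards [ae_restrict_mem measurableSet_Ioi] with r hr
  have hr : 0 < r := hr
  have hp : 0 < Real.exp (β * r) - 1 := by
    have := Real.add_one_lt_exp (show β * r ≠ 0 by positivity)
    have : 0 < β * r := by positivity
    linarith
  have e : Complex.exp (β * r) - 1 = ((Real.exp (β * r) - 1 : ℝ) : ℂ) := by push_cast; rfl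
  rw [e, norm_div, norm_mul, Complex.norm_exp, Complex.norm_real, Complex.norm_real,
    Real.norm_of_nonneg hr.le, Real.norm_of_nonneg hp.le]
  simpa using aux_lower hβ hr

lemma aux_J_sum {β : ℝ} (s : ℝ) (hβ : 0 < β) :
    HasSum (fun n : ℕ => 1 / (β * (n + 1) - Complex.I * s : ℂ) ^ 2)
      (∫ r in Ioi (0:ℝ), (r : ℂ) * Complex.exp (Complex.I * s * r) /
      (Complex.exp (β * r) - 1)) := by
  have hre : ∀ n : ℕ, (β * (n + 1) - Complex.I * s : ℂ).re = β * (n + 1) := by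
    intro n; simp
  have hpos : ∀ n : ℕ, 0 < (β * (n + 1) - Complex.I * s : ℂ).re := by
    intro n; rw [hre]; positivity
  have key := hasSum_integral_of_summable_integral_norm (μ := volume.restrict (Ioi (0:ℝ)))
    (F := fun (n : ℕ) (t : ℝ) => (t : ℂ) * Complex.exp (-(β * (n + 1) - Complex.I * s : ℂ) * t))
    (fun n => aux_int (hpos n)) ?_
  · simp_rw [fun n : ℕ => aux_val (hpos n)] at key
    refine Eq.mp (congrArg (HasSum _) (Eq.symm ?_)) key
    refine setIntegral_congr_fun measurableSet_Ioi fun (r : ℝ) (hr : 0 < r) => ?_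
    have hq : ‖Complex.exp (-(β * r : ℂ))‖ < 1 := by
      rw [Complex.norm_exp]
      have : 0 < β * r := by positivity
      simpa using this
    have hg := (hasSum_geometric_of_norm_lt_one hq).mul_left
      ((r : ℂ) * Complex.exp (Complex.I * s * r) * Complex.exp (-(β * r : ℂ)))
    have he : Complex.exp (β * r : ℂ) - 1 ≠ 0 := by
      intro h
      have h1 : Complex.exp (-(β * r : ℂ)) = 1 := by
        rw [Complex.exp_neg, sub_eq_zero.1 h]; simp
      rw [h1] at hq; simp at hq
    have hm : Complex.exp (-(β * r : ℂ)) * Complex.exp (β * r : ℂ) = 1 := by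
      rw [← Complex.exp_add]; simp
    have h1q : 1 - Complex.exp (-(β * r : ℂ)) ≠ 0 := by
      intro h
      have : Complex.exp (-(β * r : ℂ)) = 1 := (sub_eq_zero.1 h).symm
      rw [this] at hq; simp at hq
    refine Eq.trans ?_ (hg.tsum_eq.symm.trans ?_)
    · rw [← div_eq_mul_inv, div_eq_div_iff he h1q]
      linear_combination (-(r : ℂ) * Complex.exp (Complex.I * s * r)) * hm
    · refine tsum_congr fun n => ?_
      rw [← Complex.exp_nat_mul, mul_assoc, mul_assoc, ← Complex.exp_add, ← Complex.exp_add]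
      congr 2
      ring
  · have : ∀ n : ℕ, ∫ t in Ioi (0:ℝ), ‖(t : ℂ) *
        Complex.exp (-(β * (n + 1) - Complex.I * s : ℂ) * t)‖ = (1 / β ^ 2) * (1 / ((n : ℝ) + 1) ^ 2) := by
      intro n
      have hb : 0 < β * ((n : ℝ) + 1) := by positivity
      rw [div_mul_div_comm, one_mul, ← mul_pow, ← aux_val_real hb]
      refine setIntegral_congr_fun measurableSet_Ioi fun t ht => ?_
      rw [norm_mul, aux_norm, hre, Complex.norm_real, Real.norm_of_nonneg (le_of_lt ht)]
    simp_rw [this]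
    refine Summable.mul_left _ ?_
    have h2 := (summable_nat_add_iff 1).2 (Real.summable_one_div_nat_pow.2 (by norm_num : 1 < 2))
    simpa using h2

lemma aux_lattice {x : ℝ} (hx : 0 < x) :
    ∑' n : ℤ, 1 / ((Complex.I * x : ℂ) + n) ^ 2 = ((-(π ^ 2 / Real.sinh (π * x) ^ 2) : ℝ) : ℂ) := by
  have h := EisensteinSeries.qExpansion_identity (k := 1) le_rfl
    ⟨Complex.I * x, by simpa using hx⟩
  have hq : Complex.exp (2 * π * Complex.I * (Complex.I * x)) = ((Real.exp (-(2 * π * x)) : ℝ) : ℂ) := by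
    push_cast
    congr 1
    linear_combination (2 * π * x : ℂ) * Complex.I_sq
  have hlt : ‖((Real.exp (-(2 * π * x)) : ℝ) : ℂ)‖ < 1 := by
    rw [Complex.norm_real, Real.norm_of_nonneg (Real.exp_pos _).le, Real.exp_lt_one_iff]
    have : 0 < 2 * π * x := by positivity
    linarith
  simp only [pow_one, Nat.reduceAdd, hq] at h
  rw [h, tsum_coe_mul_geometric_of_norm_lt_one hlt]
  have e1 : (-2 * π * Complex.I) ^ 2 = ((-(4 * π ^ 2) : ℝ) : ℂ) := by
    push_cast
    linear_combination (4 * π ^ 2 : ℂ) * Complex.I_sq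
  rw [e1]
  simp only [Nat.factorial_one, Nat.cast_one, div_one]
  norm_cast
  have hs : 0 < Real.sinh (π * x) := Real.sinh_pos_iff.2 (by positivity)
  have hE : Real.exp (-(2 * π * x)) = Real.exp (-(π * x)) * Real.exp (-(π * x)) := by
    rw [← Real.exp_add]; ring_nf
  have hm : Real.exp (π * x) * Real.exp (-(π * x)) = 1 := by
    rw [← Real.exp_add]; simp
  have h1 : 1 - Real.exp (-(2 * π * x)) = 2 * Real.exp (-(π * x)) * Real.sinh (π * x) := by
    rw [Real.sinh_eq, hE]; linear_combination -hm
  rw [h1, hE]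
  have := Real.exp_pos (-(π * x))
  field_simp
  ring

lemma aux_frac {b u w : ℂ} (hb : b ≠ 0) (h : w ^ 2 = b ^ 2 * u ^ 2) :
    1 / u ^ 2 = b ^ 2 * (1 / w ^ 2) := by
  rw [h, one_div, one_div, mul_inv, mul_inv_cancel_left₀ (pow_ne_zero 2 hb)]

lemma aux_main {β s : ℝ} (hβ : 0 < β) (hs : 0 < s) :
    (∫ r in Ioi (0:ℝ), (r : ℂ) * Complex.exp (Complex.I * s * r) / (Complex.exp (β * r) - 1))
    + (∫ r in Ioi (0:ℝ), (r : ℂ) * Complex.exp (Complex.I * (-s : ℝ) * r) /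
        (Complex.exp (β * r) - 1))
    = ((1 / s ^ 2 - (π ^ 2 / β ^ 2) * (1 / Real.sinh (π * s / β) ^ 2) : ℝ) : ℂ) := by
  have h1 := (aux_J_sum s hβ).mul_left ((β : ℂ) ^ 2)
  have h2 := (aux_J_sum (-s) hβ).mul_left ((β : ℂ) ^ 2)
  set A := ∫ r in Ioi (0:ℝ), (r : ℂ) * Complex.exp (Complex.I * s * r) / (Complex.exp (β * r) - 1)
  set B := ∫ r in Ioi (0:ℝ), (r : ℂ) * Complex.exp (Complex.I * (-s : ℝ) * r) /
        (Complex.exp (β * r) - 1)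
  have hb : (β : ℂ) ≠ 0 := by exact_mod_cast hβ.ne'
  have hs0 : (s : ℂ) ≠ 0 := by exact_mod_cast hs.ne'
  have h3 := HasSum.of_add_one_of_neg_add_one
    (f := fun n : ℤ => 1 / ((Complex.I * (s / β : ℝ) : ℂ) + n) ^ 2)
    (m := (β : ℂ) ^ 2 * B) (m' := (β : ℂ) ^ 2 * A) ?_ ?_
  · have h4 := h3.tsum_eq.symm.trans (aux_lattice (x := s / β) (by positivity))
    have h5 : 1 / ((Complex.I * (s / β : ℝ) : ℂ) + (0 : ℤ)) ^ 2 = - ((β : ℂ) ^ 2 / s ^ 2) := by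
      push_cast
      rw [add_zero, mul_pow, Complex.I_sq]
      field_simp
    rw [h5, ← mul_div_assoc] at h4
    have h6 : (β : ℂ) ^ 2 * (A + B) = (β : ℂ) ^ 2 *
      ((1 / s ^ 2 - (π ^ 2 / β ^ 2) * (1 / Real.sinh (π * s / β) ^ 2) : ℝ) : ℂ) := by
      have h7 : (β : ℂ) ^ 2 *
        ((1 / s ^ 2 - (π ^ 2 / β ^ 2) * (1 / Real.sinh (π * s / β) ^ 2) : ℝ) : ℂ)
        = (β : ℂ) ^ 2 / s ^ 2 + ((-(π ^ 2 / Real.sinh (π * s / β) ^ 2) : ℝ) : ℂ) := by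
        norm_cast
        field_simp
        ring
      rw [h7, ← h4]; ring
    exact mul_left_cancel₀ (pow_ne_zero 2 hb) h6
  · refine Eq.mp (congrArg (fun f => HasSum f _) (funext fun n => ?_)) h2
    refine (aux_frac hb ?_).symm
    push_cast
    field_simp
    ring
  · refine Eq.mp (congrArg (fun f => HasSum f _) (funext fun n => ?_)) h1
    refine (aux_frac hb ?_).symm
    push_cast
    field_simp
    ring

theorem stmt0 (β s : ℝ) (hβ : 0 < β) (hs : s ≠ 0) :
    IntegrableOn (fun r : ℝ => r * Real.cos (r * s) / (Real.exp (β * r) - 1)) (Set.Ioi 0) ∧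
    ∫ r in Set.Ioi (0 : ℝ), r * Real.cos (r * s) / (Real.exp (β * r) - 1)
      = 1 / (2 * s ^ 2) - (π ^ 2 / (2 * β ^ 2)) * (1 / Real.sinh (π * s / β) ^ 2) := by
  wlog hs' : 0 < s generalizing s
  · have := this (-s) (neg_ne_zero.2 hs) (by
      rcases lt_or_gt_of_ne hs with h | h
      · linarith
      · exact absurd h hs')
    simpa [mul_neg, neg_div, Real.sinh_neg] using this
  have hA := aux_J_int s hβ
  have hB := aux_J_int (-s) hβ
  have hAB := hA.add hB
  have hfun : ∀ r : ℝ, (r : ℂ) * Complex.exp (Complex.I * s * r) / (Complex.exp (β * r) - 1) +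
      (r : ℂ) * Complex.exp (Complex.I * (-s : ℝ) * r) / (Complex.exp (β * r) - 1)
      = ((2 * (r * Real.cos (r * s) / (Real.exp (β * r) - 1)) : ℝ) : ℂ) := by
    intro r
    push_cast
    have h1 : Complex.I * s * r = (r * s) * Complex.I := by ring
    have h2 : Complex.I * (-s) * r = -(r * s) * Complex.I := by ring
    have h3 := Complex.two_cos (r * s : ℂ)
    rw [h1, h2]
    rw [show (2 : ℂ) * (r * Complex.cos (r * s) / (Complex.exp (β * r) - 1)) =
      r * (2 * Complex.cos (r * s)) / (Complex.exp (β * r) - 1) by ring, h3]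
    ring
  have hint2 : IntegrableOn (fun r : ℝ => 2 * (r * Real.cos (r * s) / (Real.exp (β * r) - 1)))
      (Ioi 0) := by
    have h := Integrable.re hAB
    refine h.congr (Filter.Eventually.of_forall fun r => ?_)
    simp only [Pi.add_apply]
    rw [hfun]
    exact Complex.ofReal_re _
  refine ⟨?_, ?_⟩
  · refine (hint2.const_mul (1 / 2)).congr (Filter.Eventually.of_forall fun r => ?_)
    simp only
    ring
  · have h := aux_main hβ hs'
    rw [← integral_add hA hB] at h
    simp_rw [hfun] at h
    rw [integral_complex_ofReal, Complex.ofReal_inj, integral_const_mul] at h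
    have h8 : (∫ r in Set.Ioi (0 : ℝ), r * Real.cos (r * s) / (Real.exp (β * r) - 1)) =
      (1 / s ^ 2 - (π ^ 2 / β ^ 2) * (1 / Real.sinh (π * s / β) ^ 2)) / 2 := by
      rw [← h]; ring
    rw [h8]
    ring
end

section
/- For all β > 0 and q > 0, the function C_β (defined by C_β(s) := 1/(2s²) − (π²/(2β²))/sinh²(π s/β) for s ≠ 0 and extended continuously by C_β(0) := π²/(6β²)) is integrable on (0,∞) and ∫₀^∞ cos(q s)·C_β(s) ds = (π/2)·q/(e^{β q} − 1). -/
open MeasureTheory Real Set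

/-- The function `C_β`, the smooth part of the thermal two-point function along a static
worldlinearises: `C_β(s) = 1/(2s²) − (π²/(2β²))/sinh²(π s/β)` for `s ≠ 0`, extended
continuously by `C_β(0) := π²/(6β²)`. -/
noncomputable def Cfun (β s : ℝ) : ℝ :=
  if s = 0 then π ^ 2 / (6 * β ^ 2)
  else 1 / (2 * s ^ 2) - (π ^ 2 / (2 * β ^ 2)) / Real.sinh (π * s / β) ^ 2

lemma HasSum.congr_fun' {f g : ℕ → ℝ} {a : ℝ} (h : HasSum f a) (e : ∀ n, f n = g n) : HasSum g a := by
  rwa [← funext e]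

/-- Mittag-Leffler expansion. -/
lemma Cfun_hasSum (β s : ℝ) (hβ : 0 < β) (hs : 0 < s) :
    HasSum (fun n : ℕ => ((1 / (((n:ℝ)+1) * β + s * Complex.I) ^ 2 : ℂ)).re) (Cfun β s) := by
  have hβc : (β : ℂ) ≠ 0 := by exact_mod_cast hβ.ne'
  have hsc : (s : ℂ) ≠ 0 := by exact_mod_cast hs.ne'
  set z : ℂ := ((s / β : ℝ) : ℂ) * Complex.I with hz
  have hzim : 0 < z.im := by
    rw [hz, Complex.im_ofReal_mul, Complex.I_im, mul_one]; positivity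
  have hq := EisensteinSeries.qExpansion_identity (k := 1) le_rfl ⟨z, hzim⟩
  have hsum : Summable (fun n : ℤ => 1 / (z + n) ^ (1 + 1)) := by
    have := EisensteinSeries.linear_right_summable z 1 (k := 2) le_rfl
    refine this.congr fun n => ?_
    simp
  have hexp : Complex.exp (2 * π * Complex.I * z) = ((Real.exp (-(2 * (π * s / β))) : ℝ) : ℂ) := by
    rw [Complex.ofReal_exp]
    congr 1
    rw [hz]; push_cast
    have : Complex.I * Complex.I = -1 := Complex.I_mul_I
    linear_combination (2 * π * (s / β) : ℂ) * this
  have hx : 0 < π * s / β := by positivity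
  have hlt : Real.exp (-(2 * (π * s / β))) < 1 := by
    rw [Real.exp_lt_one_iff]; linarith
  have hgeo : ∑' n : ℕ, (n : ℂ) ^ 1 * Complex.exp (2 * π * Complex.I * z) ^ n
      = ((1 / (4 * Real.sinh (π * s / β) ^ 2) : ℝ) : ℂ) := by
    rw [hexp]
    simp only [pow_one]
    rw [tsum_coe_mul_geometric_of_norm_lt_one]
    · norm_cast
      set x := π * s / β
      have h1 : Real.exp (-(2*x)) = Real.exp (-x) ^ 2 := by
        rw [← Real.exp_nat_mul]; congr 1; push_cast; ring
      have h2 : Real.exp x * Real.exp (-x) = 1 := by rw [← Real.exp_add]; simp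
      have h3 : 0 < Real.sinh x := Real.sinh_pos_iff.2 hx
      have h4 : 1 - Real.exp (-(2*x)) = 2 * Real.exp (-x) * Real.sinh x := by
        rw [Real.sinh_eq, h1]; linear_combination -h2
      rw [h4, h1]
      have := Real.exp_pos (-x)
      field_simp
      norm_num
    · rw [Complex.norm_real, Real.norm_of_nonneg (Real.exp_pos _).le]; exact hlt
  have hH := hsum.hasSum.nat_add_neg
  rw [show (∑' n : ℤ, 1 / (z + n) ^ (1 + 1)) = _ from hq] at hH
  have hH2 := (hasSum_nat_add_iff' 1).2 hH
  have hH3 := Complex.hasSum_re (hH2.mul_left (1 / (2 * (β:ℂ)^2)))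
  have e2 : (1 / (2 * (β:ℂ)^2)) * ((-2 * π * Complex.I) ^ (1 + 1) / (Nat.factorial 1 : ℕ) *
      ∑' n : ℕ, (n : ℂ) ^ 1 * Complex.exp (2 * π * Complex.I * z) ^ n + 1 / (z + ((0:ℤ):ℂ)) ^ (1 + 1)
      - ∑ i ∈ Finset.range 1, (1 / (z + ((i:ℤ):ℂ)) ^ (1 + 1) + 1 / (z + ((-(i:ℤ) : ℤ):ℂ)) ^ (1 + 1)))
      = ((Cfun β s : ℝ) : ℂ) := by
    rw [hgeo, Cfun, if_neg hs.ne']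
    have hsh : ((Real.sinh (π * s / β) : ℝ) : ℂ) ≠ 0 := by
      exact_mod_cast (Real.sinh_pos_iff.2 hx).ne'
    generalize Real.sinh (π * s / β) = S at hsh
    simp only [Finset.range_one, Finset.sum_singleton, hz]
    push_cast
    simp only [Nat.factorial_one, Nat.cast_one, neg_zero, add_zero, mul_pow, Complex.I_sq]
    field_simp
    ring
  have hH4 := hH3
  rw [show _ = (((Cfun β s : ℝ) : ℂ)).re from congrArg Complex.re e2, Complex.ofReal_re] at hH4
  refine HasSum.congr_fun' hH4 fun n => ?_
  have hw1 : (1 / (2 * (β:ℂ)^2)) * (1 / (z + ((((n + 1 : ℕ) : ℤ)) : ℂ)) ^ (1 + 1)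
        + 1 / (z + ((-((n + 1 : ℕ) : ℤ) : ℤ) : ℂ)) ^ (1 + 1))
      = (1/2 : ℝ) * (1 / (((n:ℝ)+1) * β + s * Complex.I) ^ 2
          + (starRingEnd ℂ) (1 / (((n:ℝ)+1) * β + s * Complex.I) ^ 2)) := by
    have a1 : z + ((((n + 1 : ℕ) : ℤ)) : ℂ) = (((n:ℝ)+1) * β + s * Complex.I) / β := by
      rw [hz]; push_cast; field_simp; ring
    have a2 : z + ((-((n + 1 : ℕ) : ℤ) : ℤ) : ℂ) = -(((n:ℝ)+1) * β - s * Complex.I) / β := by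
      rw [hz]; push_cast; field_simp; ring
    rw [a1, a2]
    simp only [map_div₀, map_pow, map_add, map_mul, Complex.conj_I, Complex.conj_ofReal, map_one]
    have b1 : (((n:ℝ)+1) * β + s * Complex.I : ℂ) ≠ 0 := by
      intro h; have := congrArg Complex.im h; simp at this; exact hs.ne' this
    have b2 : (((n:ℝ)+1) * β - s * Complex.I : ℂ) ≠ 0 := by
      intro h; have := congrArg Complex.im h; simp at this; exact hs.ne' this
    rw [show (((n:ℝ)+1) * β + s * -Complex.I : ℂ) = ((n:ℝ)+1) * β - s * Complex.I by ring]
    push_cast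
    push_cast at b1 b2
    generalize ((n:ℂ)+1) * β + s * Complex.I = u at *
    generalize ((n:ℂ)+1) * β - s * Complex.I = v at *
    field_simp
  rw [hw1, Complex.re_ofReal_mul, Complex.add_re, Complex.conj_re]
  ring

lemma integrable_qexp (a : ℝ) (ha : 0 < a) :
    IntegrableOn (fun q : ℝ => q * Real.exp (-(a * q))) (Ioi 0) := by
  have := integrableOn_rpow_mul_exp_neg_mul_rpow (p := 1) (s := 1) (b := a)
    (by norm_num) (by norm_num) ha
  simpa using this

lemma int_qexp (a : ℝ) (ha : 0 < a) :
    ∫ q in Ioi (0:ℝ), q * Real.exp (-(a * q)) = 1 / a ^ 2 := by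
  have := Real.integral_rpow_mul_exp_neg_mul_Ioi (a := 2) (r := a) (by norm_num) ha
  norm_num at this
  simpa using this

lemma integrable_cexp (a s : ℝ) (ha : 0 < a) :
    IntegrableOn (fun q : ℝ => (q : ℂ) * Complex.exp (-((a + s * Complex.I) * q))) (Ioi 0) := by
  refine Integrable.mono' (integrable_qexp a ha) (by fun_prop) ?_
  refine (ae_restrict_iff' measurableSet_Ioi).2 (Filter.Eventually.of_forall fun q hq => ?_)
  rw [norm_mul, Complex.norm_exp, Complex.norm_real, Real.norm_of_nonneg (le_of_lt hq)]
  simp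

lemma int_cexp (a s : ℝ) (ha : 0 < a) :
    ∫ q in Ioi (0:ℝ), (q : ℂ) * Complex.exp (-((a + s * Complex.I) * q))
      = 1 / ((a:ℂ) + s * Complex.I)^2 := by
  set c : ℂ := a + s * Complex.I with hc
  have hc0 : c ≠ 0 := by
    intro h; have := congrArg Complex.re h; simp [hc] at this; exact ha.ne' this
  have hd : ∀ x ∈ Ici (0:ℝ), HasDerivAt (fun q : ℝ => -((q:ℂ) / c + 1 / c^2) * Complex.exp (-(c * q)))
      ((x : ℂ) * Complex.exp (-(c * x))) x := by
    intro x _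
    have h0 : HasDerivAt (fun q : ℝ => (q : ℂ)) 1 x := Complex.ofRealCLM.hasDerivAt
    have h1 := ((h0.div_const c).add_const (1 / c^2)).neg
    have h2 := ((h0.const_mul c).neg).cexp
    convert! h1.mul h2 using 1
    simp only [Pi.neg_apply]
    field_simp
    ring
  have ht : Filter.Tendsto (fun q : ℝ => -((q:ℂ) / c + 1 / c^2) * Complex.exp (-(c * q)))
      Filter.atTop (nhds 0) := by
    have e0 := Real.tendsto_pow_mul_exp_neg_atTop_nhds_zero 0
    have t0 : Filter.Tendsto (fun q : ℝ => Real.exp (-(a*q))) Filter.atTop (nhds 0) := by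
      refine Real.tendsto_exp_neg_atTop_nhds_zero.comp (Filter.tendsto_id.const_mul_atTop ha)
    have t1 : Filter.Tendsto (fun q : ℝ => q * Real.exp (-(a*q))) Filter.atTop (nhds 0) := by
      have := ((Real.tendsto_pow_mul_exp_neg_atTop_nhds_zero 1).comp
        (Filter.tendsto_id.const_mul_atTop ha)).const_mul (1/a)
      rw [mul_zero] at this
      refine this.congr fun q => ?_
      simp only [Function.comp, id]
      field_simp
    have t2 := (t1.const_mul (1 / ‖c‖)).add (t0.const_mul (1 / ‖c‖^2))
    simp only [mul_zero, add_zero] at t2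
    refine squeeze_zero_norm' ?_ t2
    filter_upwards [Filter.eventually_ge_atTop 0] with q hq
    have en : ‖Complex.exp (-(c * q))‖ = Real.exp (-(a*q)) := by
      rw [Complex.norm_exp]; simp [hc]
    rw [norm_mul, norm_neg, en]
    calc _ ≤ (‖(q:ℂ)/c‖ + ‖1/c^2‖) * Real.exp (-(a*q)) := by gcongr; exact norm_add_le _ _
      _ = _ := by
        rw [norm_div, norm_div, norm_pow, Complex.norm_real, Real.norm_of_nonneg hq, norm_one]; ring
  rw [integral_Ioi_of_hasDerivAt_of_tendsto' hd (integrable_cexp a s ha) ht]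
  simp

lemma re_cexp (a s q : ℝ) : ((q : ℂ) * Complex.exp (-((a + s * Complex.I) * q))).re
    = Real.cos (q * s) * (q * Real.exp (-(a * q))) := by
  rw [Complex.re_ofReal_mul, Complex.exp_re]
  simp
  rw [mul_comm s q]; ring

lemma int_cos (a s : ℝ) (ha : 0 < a) :
    ∫ q in Ioi (0:ℝ), Real.cos (q * s) * (q * Real.exp (-(a*q)))
      = (1 / ((a:ℂ) + s * Complex.I)^2).re := by
  rw [← int_cexp a s ha]
  have := integral_re (integrable_cexp a s ha)
  simp only [RCLike.re_eq_complex_re, ← re_cexp a s] at this ⊢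
  exact this

lemma int_cos_pos (β s : ℝ) (hβ : 0 < β) (hs : 0 < s) :
    ∫ q in Ioi (0:ℝ), Real.cos (q * s) * (q / (Real.exp (β * q) - 1)) = Cfun β s := by
  have ha : ∀ n : ℕ, 0 < ((n:ℝ)+1) * β := fun n => by positivity
  have h := hasSum_integral_of_summable_integral_norm (μ := volume.restrict (Ioi (0:ℝ)))
    (F := fun (n : ℕ) (q : ℝ) => Real.cos (q * s) * (q * Real.exp (-((((n:ℝ)+1) * β)*q))))
    (fun n => by
      have := (integrable_cexp (((n:ℝ)+1) * β) s (ha n)).re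
      simpa only [RCLike.re_eq_complex_re, re_cexp] using this)
    (by
      have hS : Summable (fun n : ℕ => 1 / (((n:ℝ)+1) * β)^2) := by
        have := ((summable_nat_add_iff 1).2 (Real.summable_one_div_nat_pow.2 one_lt_two)).mul_left (1/β^2)
        refine this.congr fun n => ?_
        push_cast
        field_simp
      refine Summable.of_nonneg_of_le (fun n => by positivity) (fun n => ?_) hS
      rw [← int_qexp _ (ha n)]
      refine integral_mono_of_nonneg (Filter.Eventually.of_forall fun q => by positivity)
        (integrable_qexp _ (ha n)) ?_
      refine (ae_restrict_iff' measurableSet_Ioi).2 (Filter.Eventually.of_forall fun q hq => ?_)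
      have hq' : (0:ℝ) < q := hq
      beta_reduce
      rw [norm_mul, Real.norm_of_nonneg (show 0 ≤ q * Real.exp (-((((n:ℝ)+1) * β)*q)) by positivity)]
      exact mul_le_of_le_one_left (by positivity) (Real.abs_cos_le_one _))
  have h' : HasSum (fun n : ℕ => ∫ q in Ioi (0:ℝ), Real.cos (q * s) * (q * Real.exp (-((((n:ℝ)+1) * β)*q))))
      (Cfun β s) := by
    have := Cfun_hasSum β s hβ hs
    refine HasSum.congr_fun' this fun n => ?_
    rw [int_cos _ _ (ha n)]; push_cast; rfl
  rw [← h.unique h']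
  refine setIntegral_congr_fun measurableSet_Ioi fun q hq => ?_
  have hq' : (0:ℝ) < q := hq
  have hlt : Real.exp (-(β*q)) < 1 := by
    rw [Real.exp_lt_one_iff]; have := mul_pos hβ hq'; linarith
  have e : ∀ n : ℕ, Real.cos (q * s) * (q * Real.exp (-((((n:ℝ)+1) * β)*q)))
      = (Real.cos (q * s) * q * Real.exp (-(β*q))) * Real.exp (-(β*q)) ^ n := by
    intro n
    rw [← Real.exp_nat_mul, mul_assoc _ (Real.exp _), ← Real.exp_add, mul_assoc]
    ring_nf
  simp only [e]
  rw [tsum_mul_left, tsum_geometric_of_lt_one (Real.exp_pos _).le hlt]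
  have h1 : 0 < 1 - Real.exp (-(β*q)) := by linarith
  have h2 : Real.exp (β*q) * Real.exp (-(β*q)) = 1 := by rw [← Real.exp_add]; simp
  have h3 : 0 < Real.exp (β*q) - 1 := by
    have := Real.add_one_lt_exp (mul_pos hβ hq').ne'
    have := mul_pos hβ hq'
    linarith
  rw [mul_div_assoc', ← div_eq_mul_inv, div_eq_div_iff h3.ne' h1.ne']
  linear_combination (-(Real.cos (q * s) * q)) * h2

lemma Cfun_neg (β s : ℝ) : Cfun β (-s) = Cfun β s := by
  simp [Cfun, neg_div, Real.sinh_neg]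

lemma int_cos_ne (β s : ℝ) (hβ : 0 < β) (hs : s ≠ 0) :
    ∫ q in Ioi (0:ℝ), Real.cos (q * s) * (q / (Real.exp (β * q) - 1)) = Cfun β s := by
  rcases lt_or_gt_of_ne hs with h | h
  · rw [← Cfun_neg, ← int_cos_pos β (-s) hβ (by linarith)]
    simp
  · exact int_cos_pos β s hβ h

noncomputable def gfun (β v : ℝ) : ℝ := |v| / (Real.exp (β * |v|) - 1)

lemma gfun_bound (β v : ℝ) (hβ : 0 < β) : ‖gfun β v‖ ≤ (6 / β) * (1 + (β * v)^2)⁻¹ := by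
  have key : ∀ x : ℝ, 0 ≤ x → 0 ≤ Real.exp x - 1 ∧ x / (Real.exp x - 1) ≤ 6 * (1 + x^2)⁻¹ := by
    intro x hx
    have h := Real.sum_le_exp_of_nonneg hx 4
    simp [Finset.sum_range_succ, Nat.factorial] at h
    have h1 : 0 ≤ Real.exp x - 1 := by nlinarith [pow_nonneg hx 2, pow_nonneg hx 3]
    refine ⟨h1, ?_⟩
    rcases hx.eq_or_lt with rfl | hx
    · simp
    have h2 : 0 < Real.exp x - 1 := by nlinarith [pow_pos hx 2, pow_pos hx 3]
    rw [← div_eq_mul_inv, div_le_div_iff₀ h2 (by positivity)]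
    nlinarith [pow_pos hx 2, pow_pos hx 3]
  obtain ⟨h1, h2⟩ := key (β * |v|) (by positivity)
  have : gfun β v = (1/β) * (β * |v| / (Real.exp (β * |v|) - 1)) := by
    rw [gfun]; field_simp
  rw [Real.norm_of_nonneg (by rw [gfun]; positivity), this]
  rw [mul_pow, sq_abs, ← mul_pow] at h2
  calc _ ≤ (1/β) * (6 * (1 + (β * v)^2)⁻¹) := by gcongr
    _ = _ := by ring

lemma gfun_integrable (β : ℝ) (hβ : 0 < β) : Integrable (gfun β) := by
  refine Integrable.mono' ((integrable_inv_one_add_sq.comp_mul_left' hβ.ne').const_mul (6/β)) ?_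
    (Filter.Eventually.of_forall fun v => gfun_bound β v hβ)
  have : Measurable (gfun β) := by unfold gfun; fun_prop
  exact this.aestronglyMeasurable

lemma Cfun_bound (β : ℝ) (hβ : 0 < β) :
    ∃ K : ℝ, ∀ s, s ≠ 0 → ‖Cfun β s‖ ≤ K * (1 + s^2)⁻¹ := by
  refine ⟨(∫ q in Ioi (0:ℝ), ‖gfun β q‖) + 1/2, fun s hs => ?_⟩
  have b1 : ‖Cfun β s‖ ≤ ∫ q in Ioi (0:ℝ), ‖gfun β q‖ := by
    rw [← int_cos_ne β s hβ hs]
    refine norm_integral_le_of_norm_le (gfun_integrable β hβ).norm.integrableOn ?_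
    refine (ae_restrict_iff' measurableSet_Ioi).2 (Filter.Eventually.of_forall fun q hq => ?_)
    rw [gfun, abs_of_pos (show (0:ℝ) < q from hq), norm_mul]
    exact mul_le_of_le_one_left (by positivity) (Real.abs_cos_le_one _)
  have b2 : s^2 * ‖Cfun β s‖ ≤ 1/2 := by
    have hs2 : 0 < s^2 := by positivity
    have hsh : (π * s / β)^2 ≤ Real.sinh (π * s / β)^2 := by
      rw [← sq_abs, ← sq_abs (Real.sinh _), Real.abs_sinh]
      gcongr
      exact Real.self_le_sinh_iff.2 (abs_nonneg _)
    have hp : 0 < (π * s / β)^2 := by have := Real.pi_pos; positivity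
    have h1 : (π ^ 2 / (2 * β ^ 2)) / Real.sinh (π * s / β) ^ 2 ≤ 1 / (2 * s^2) := by
      calc _ ≤ (π ^ 2 / (2 * β ^ 2)) / (π * s / β) ^ 2 := by gcongr
        _ = _ := by have := Real.pi_pos; field_simp
    have h2 : 0 ≤ (π ^ 2 / (2 * β ^ 2)) / Real.sinh (π * s / β) ^ 2 := by positivity
    rw [Cfun, if_neg hs, Real.norm_of_nonneg (by linarith)]
    calc _ ≤ s^2 * (1 / (2*s^2)) := by gcongr; linarith
      _ = 1/2 := by field_simp
  rw [← div_eq_mul_inv, le_div_iff₀ (by positivity)]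
  linarith

lemma ae_ne_zero' : ∀ᵐ s : ℝ, s ≠ 0 := by
  simp [ae_iff]

lemma Cfun_integrable (β : ℝ) (hβ : 0 < β) : Integrable (Cfun β) := by
  obtain ⟨K, hK⟩ := Cfun_bound β hβ
  refine Integrable.mono' (integrable_inv_one_add_sq.const_mul K) ?_
    (ae_ne_zero'.mono hK)
  have : Measurable (Cfun β) := by
    unfold Cfun
    exact Measurable.ite (measurableSet_singleton 0) (by fun_prop) (by fun_prop)
  exact this.aestronglyMeasurable

open FourierTransform in
lemma fourier_even (f : ℝ → ℝ) (hf : Integrable f) (he : ∀ x, f (-x) = f x) (w : ℝ) :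
    𝓕 (fun x => (f x : ℂ)) w
      = ((2 * ∫ v in Ioi (0:ℝ), Real.cos (v * (2 * π * w)) * f v : ℝ) : ℂ) := by
  have hF : ∀ w, 𝓕 (fun x => (f x : ℂ)) w
      = ∫ v : ℝ, Complex.exp (↑(-2 * π * v * w) * Complex.I) * (f v : ℂ) := by
    intro w
    rw [Real.fourier_real_eq_integral_exp_smul]; simp only [smul_eq_mul]
  have hi : ∀ w : ℝ, Integrable (fun v : ℝ => Complex.exp (↑(-2 * π * v * w) * Complex.I) * (f v : ℂ)) := by
    intro w
    refine hf.ofReal.bdd_mul (c := 1) (by fun_prop) (Filter.Eventually.of_forall fun v => ?_)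
    rw [Complex.norm_exp_ofReal_mul_I]
  have hneg : 𝓕 (fun x => (f x : ℂ)) w
      = ∫ v : ℝ, Complex.exp (↑(-2 * π * v * (-w)) * Complex.I) * (f v : ℂ) := by
    rw [hF, ← integral_neg_eq_self]
    refine integral_congr_ae (Filter.Eventually.of_forall fun v => ?_)
    simp only [he]
    congr 4; ring
  have h2 : 2 * 𝓕 (fun x => (f x : ℂ)) w
      = ((2 * ∫ v : ℝ, Real.cos (v * (2 * π * w)) * f v : ℝ) : ℂ) := by
    rw [two_mul]
    nth_rewrite 1 [hF]
    rw [hneg, ← integral_add (hi w) (hi (-w))]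
    rw [← integral_const_mul, ← integral_complex_ofReal]
    refine integral_congr_ae (Filter.Eventually.of_forall fun v => ?_)
    push_cast
    rw [Complex.cos]
    ring_nf
  have h3 : ∫ v : ℝ, Real.cos (v * (2 * π * w)) * f v
      = 2 * ∫ v in Ioi (0:ℝ), Real.cos (v * (2 * π * w)) * f v := by
    rw [← integral_comp_abs (f := fun v => Real.cos (v * (2 * π * w)) * f v)]
    refine integral_congr_ae (Filter.Eventually.of_forall fun v => ?_)
    rcases abs_choice v with h | h <;> simp [h, he]
  rw [← h3]
  have := h2
  push_cast at this ⊢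
  exact mul_left_cancel₀ two_ne_zero this

open FourierTransform in
/-- For `β > 0` and `q > 0`, `C_β` is integrable on `(0,∞)` and
`∫₀^∞ cos(q s)·C_β(s) ds = (π/2)·q/(e^{β q} − 1)`. -/
theorem stmt1 (β q : ℝ) (hβ : 0 < β) (hq : 0 < q) :
    IntegrableOn (Cfun β) (Set.Ioi 0) ∧
    ∫ s in Set.Ioi (0 : ℝ), Real.cos (q * s) * Cfun β s
      = (π / 2) * (q / (Real.exp (β * q) - 1)) := by
  have hC := Cfun_integrable β hβ
  refine ⟨hC.integrableOn, ?_⟩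
  have hg := gfun_integrable β hβ
  have h2π : (2 * π) ≠ 0 := by have := Real.pi_pos; positivity
  have hD : Integrable (fun w => 2 * Cfun β (2 * π * w)) :=
    (hC.comp_mul_left' h2π).const_mul 2
  have hFg : 𝓕 (fun x => (gfun β x : ℂ)) =ᵐ[volume] fun w => ((2 * Cfun β (2 * π * w) : ℝ) : ℂ) := by
    filter_upwards [ae_ne_zero'] with w hw
    rw [fourier_even _ hg (fun x => by simp [gfun])]
    rw [← int_cos_ne β (2 * π * w) hβ (mul_ne_zero h2π hw)]
    congr 2
    refine setIntegral_congr_fun measurableSet_Ioi fun v hv => ?_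
    simp only [gfun, abs_of_pos (show (0:ℝ) < v from hv)]
  have h3 : 0 < Real.exp (β*q) - 1 := by
    have := Real.add_one_lt_exp (mul_pos hβ hq).ne'
    have := mul_pos hβ hq
    linarith
  have hcont : ContinuousAt (fun x => (gfun β x : ℂ)) q := by
    refine Complex.continuous_ofReal.continuousAt.comp ?_
    unfold gfun
    refine ContinuousAt.div (by fun_prop) (by fun_prop) ?_
    rw [abs_of_pos hq]; exact h3.ne'
  have hinv : 𝓕⁻ (𝓕 (fun x => (gfun β x : ℂ))) q = (gfun β q : ℂ) := (hg.ofReal (𝕜 := ℂ)).fourierInv_fourier_eq ((hD.ofReal (𝕜 := ℂ)).congr hFg.symm) hcont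
  rw [Real.fourierInv_eq_fourier_neg, Real.fourier_congr_ae hFg, fourier_even _ hD
    (fun x => by rw [mul_neg, Cfun_neg])] at hinv
  have hinv' := Complex.ofReal_injective hinv
  have hsub := integral_comp_mul_left_Ioi (fun s => Real.cos (q * s) * Cfun β s) 0
    (b := 2 * π) (by have := Real.pi_pos; positivity)
  rw [mul_zero, smul_eq_mul] at hsub
  have e : ∫ v in Ioi (0:ℝ), Real.cos (v * (2 * π * -q)) * (2 * Cfun β (2 * π * v))
      = 2 * ∫ v in Ioi (0:ℝ), Real.cos (q * (2 * π * v)) * Cfun β (2 * π * v) := by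
    rw [← integral_const_mul]
    refine integral_congr_ae (Filter.Eventually.of_forall fun v => ?_)
    simp only
    rw [show v * (2 * π * -q) = -(q * (2 * π * v)) by ring, Real.cos_neg]; ring
  rw [e, hsub, gfun, abs_of_pos hq] at hinv'
  rw [← hinv']
  field_simp
end

section
/- For all β > 0 and q > 0, the improper integral ∫₀^∞ sin(q r)/(e^{β r} − 1) dr converges and equals −1/(2q) + (π/(2β))·coth(π q/β). -/
open MeasureTheory Real Set

/-- The real hyperbolic cotangent. -/
noncomputable def coth (x : ℝ) : ℝ := Real.cosh x / Real.sinh x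

lemma aux_coth (y : ℝ) (hy : 0 < y) :
    ∑' n : ℕ, y / (y ^ 2 + ((n : ℝ) + 1) ^ 2) = (π * coth (π * y) - 1 / y) / 2 := by
  have hx : ((y : ℂ) * Complex.I) ∈ Complex.integerComplement := by
    rw [Complex.mem_integerComplement_iff]
    rintro ⟨n, hn⟩
    have := congrArg Complex.im hn
    simp at this
    exact hy.ne this
  have h := cot_series_rep' hx
  have hyc : (y : ℂ) ≠ 0 := by exact_mod_cast hy.ne'
  have hs : Real.sinh (π * y) ≠ 0 := by
    rw [Ne, Real.sinh_eq_zero]; positivity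
  have e1 : (π : ℂ) * Complex.cot (π * ((y : ℂ) * Complex.I)) - 1 / ((y : ℂ) * Complex.I)
      = ((-2 * ((π * coth (π * y) - 1 / y) / 2) : ℝ) : ℂ) * Complex.I := by
    have hs' : Complex.sinh (π * y) ≠ 0 := by exact_mod_cast hs
    rw [← mul_assoc, Complex.cot, Complex.cos_mul_I, Complex.sin_mul_I, coth]
    push_cast
    field_simp
    ring_nf
    simp
    ring
  have e2 : ∀ n : ℕ, 1 / ((y : ℂ) * Complex.I - (n + 1)) + 1 / ((y : ℂ) * Complex.I + (n + 1))
      = ((y / (y ^ 2 + ((n : ℝ) + 1) ^ 2) : ℝ) : ℂ) * (-2 * Complex.I) := by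
    intro n
    have a1 : (y : ℂ) * Complex.I - (n + 1) ≠ 0 := by
      intro h0
      have := congrArg Complex.im h0
      simp at this
      exact hy.ne' this
    have a2 : (y : ℂ) * Complex.I + (n + 1) ≠ 0 := by
      intro h0
      have := congrArg Complex.im h0
      simp at this
      exact hy.ne' this
    have a3 : (y : ℂ) ^ 2 + ((n : ℂ) + 1) ^ 2 ≠ 0 := by
      have : y ^ 2 + ((n : ℝ) + 1) ^ 2 ≠ 0 := by positivity
      exact_mod_cast this
    push_cast
    rw [div_add_div _ _ a1 a2, div_mul_eq_mul_div, div_eq_div_iff (mul_ne_zero a1 a2) a3]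
    have hI := Complex.I_sq
    linear_combination (2 * (y:ℂ) ^ 3 * Complex.I) * hI
  rw [e1, tsum_congr e2, tsum_mul_right, ← Complex.ofReal_tsum] at h
  have := congrArg Complex.im h
  simp at this
  simp
  linarith

lemma aux_bound (β q r : ℝ) (hβ : 0 < β) (hq : 0 < q) (hr : 0 < r) :
    |Real.sin (q * r)| / (Real.exp (β * r) - 1) ≤ q / β * Real.exp (-(β / 2) * r) := by
  have h1 : |Real.sin (q * r)| ≤ q * r := by
    have := Real.abs_sin_le_abs (x := q * r)
    rwa [abs_of_pos (mul_pos hq hr)] at this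
  have h2 : β * r * Real.exp (β / 2 * r) ≤ Real.exp (β * r) - 1 := by
    have hs : β / 2 * r ≤ Real.sinh (β / 2 * r) := Real.self_le_sinh_iff.2 (by positivity)
    rw [Real.sinh_eq] at hs
    have he : Real.exp (β / 2 * r) * Real.exp (-(β / 2 * r)) = 1 := by
      rw [← Real.exp_add]; simp
    have he2 : Real.exp (β * r) = Real.exp (β / 2 * r) * Real.exp (β / 2 * r) := by
      rw [← Real.exp_add]; ring_nf
    have hp := Real.exp_pos (β / 2 * r)
    rw [he2]
    nlinarith
  have hp := Real.exp_pos (β / 2 * r)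
  have h3 : 0 < β * r * Real.exp (β / 2 * r) := by positivity
  calc _ ≤ (q * r) / (β * r * Real.exp (β / 2 * r)) := by gcongr
    _ = _ := by
      rw [neg_mul, Real.exp_neg]; field_simp

lemma aux_term (b q : ℝ) (hb : 0 < b) :
    IntegrableOn (fun r : ℝ => Real.sin (q * r) * Real.exp (-b * r)) (Set.Ioi 0) ∧
    ∫ r in Set.Ioi (0 : ℝ), Real.sin (q * r) * Real.exp (-b * r) = q / (q ^ 2 + b ^ 2) := by
  have ha : ((-b : ℂ) + q * Complex.I).re < 0 := by simp [hb]
  have hi := integrableOn_exp_mul_complex_Ioi ha 0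
  have hv := integral_exp_mul_complex_Ioi ha 0
  have e : ∀ r : ℝ, Real.sin (q * r) * Real.exp (-b * r)
      = RCLike.im (Complex.exp (((-b : ℂ) + q * Complex.I) * r)) := by
    intro r
    simp [Complex.exp_im, mul_comm]
  simp_rw [e]
  refine ⟨hi.im, ?_⟩
  have := integral_im (𝕜 := ℂ) hi
  rw [this, hv]
  simp [Complex.div_im, Complex.normSq_apply]
  ring

lemma aux_geom (β r : ℝ) (hβ : 0 < β) (hr : 0 < r) (s : ℝ) :
    HasSum (fun n : ℕ => s * Real.exp (-(β * ((n : ℝ) + 1)) * r))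
      (s / (Real.exp (β * r) - 1)) := by
  have hlt : Real.exp (-(β * r)) < 1 := by
    rw [Real.exp_lt_one_iff]; have := mul_pos hβ hr; linarith
  have h := (hasSum_geometric_of_lt_one (Real.exp_pos _).le hlt).mul_left
    (s * Real.exp (-(β * r)))
  have h1 : 1 < Real.exp (β * r) := by
    rw [Real.one_lt_exp_iff]; positivity
  have hv : s / (Real.exp (β * r) - 1)
      = s * Real.exp (-(β * r)) * (1 - Real.exp (-(β * r)))⁻¹ := by
    rw [Real.exp_neg]
    have : Real.exp (β * r) - 1 ≠ 0 := by linarith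
    field_simp
  rw [hv]
  refine Eq.mp (congrArg (fun f : ℕ → ℝ => HasSum f _) (funext fun n => ?_)) h
  symm
  rw [mul_assoc, ← Real.exp_nat_mul, ← Real.exp_add]
  ring_nf

/-- For `β > 0` and `q > 0`, the integral
`∫₀^∞ sin(q r)/(e^{β r} − 1) dr` converges and equals `−1/(2q) + (π/(2β))·coth(π q/β)`. -/
theorem stmt2 (β q : ℝ) (hβ : 0 < β) (hq : 0 < q) :
    IntegrableOn (fun r : ℝ => Real.sin (q * r) / (Real.exp (β * r) - 1)) (Set.Ioi 0) ∧
    ∫ r in Set.Ioi (0 : ℝ), Real.sin (q * r) / (Real.exp (β * r) - 1)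
      = -(1 / (2 * q)) + (π / (2 * β)) * coth (π * q / β) := by
  have hint : IntegrableOn (fun r : ℝ => Real.sin (q * r) / (Real.exp (β * r) - 1))
      (Set.Ioi 0) := by
    have hg : IntegrableOn (fun r : ℝ => q / β * Real.exp (-(β / 2) * r)) (Set.Ioi 0) :=
      (integrableOn_exp_mul_Ioi (by linarith) 0).const_mul _
    refine Integrable.mono' hg ?_ ?_
    · exact (Measurable.aestronglyMeasurable (by fun_prop))
    · filter_upwards [ae_restrict_mem measurableSet_Ioi] with r hr
      have h1 : 0 ≤ Real.exp (β * r) - 1 := by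
        have := Real.add_one_le_exp (β * r)
        have := mul_pos hβ hr
        linarith
      rw [Real.norm_eq_abs, abs_div, abs_of_nonneg h1]
      exact aux_bound β q r hβ hq hr
  refine ⟨hint, ?_⟩
  have hpos : ∀ n : ℕ, 0 < β * ((n : ℝ) + 1) := fun n => by positivity
  have key := hasSum_integral_of_dominated_convergence
    (μ := volume.restrict (Set.Ioi (0 : ℝ)))
    (F := fun (n : ℕ) (r : ℝ) => Real.sin (q * r) * Real.exp (-(β * ((n : ℝ) + 1)) * r))
    (f := fun r => Real.sin (q * r) / (Real.exp (β * r) - 1))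
    (fun n r => |Real.sin (q * r)| * Real.exp (-(β * ((n : ℝ) + 1)) * r))
    (fun n => (aux_term _ q (hpos n)).1.aestronglyMeasurable)
    (fun n => Filter.Eventually.of_forall fun r => by
      simp [abs_mul])
    (by
      filter_upwards [ae_restrict_mem measurableSet_Ioi] with r hr
      exact (aux_geom β r hβ hr _).summable)
    (by
      refine hint.norm.congr ?_
      filter_upwards [ae_restrict_mem measurableSet_Ioi] with r hr
      rw [(aux_geom β r hβ hr _).tsum_eq]
      have h1 : 0 ≤ Real.exp (β * r) - 1 := by
        have := Real.add_one_le_exp (β * r)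
        have := mul_pos hβ hr
        linarith
      rw [Real.norm_eq_abs, abs_div, abs_of_nonneg h1])
    (by
      filter_upwards [ae_restrict_mem measurableSet_Ioi] with r hr
      exact aux_geom β r hβ hr _)
  rw [← key.tsum_eq]
  have hc := aux_coth (q / β) (by positivity)
  have e : ∀ n : ℕ, ∫ r in Set.Ioi (0 : ℝ),
      Real.sin (q * r) * Real.exp (-(β * ((n : ℝ) + 1)) * r)
      = 1 / β * (q / β / ((q / β) ^ 2 + ((n : ℝ) + 1) ^ 2)) := by
    intro n
    rw [(aux_term _ q (hpos n)).2]
    field_simp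
  rw [tsum_congr e, tsum_mul_left, hc, ← mul_div_assoc]
  field_simp
  ring
end

section
/- Let β > 0, v ∈ (−1,1) with v ≠ 0, γ := 1/√(1 − v²), d₊ := γ(1 + v), d₋ := γ(1 − v), and define w̃_{β,v}(s) := (1/(4πβγv))·(f_{βd₊}(s) − f_{βd₋}(s)). Then for every E ∈ ℝ with E ≠ 0: ∫_ℝ e^{−i E s}·w̃_{β,v}(s) ds − (E/(2π))·Θ(−E) = (1/(4πβγv))·ln((1 − e^{−β d₊ E})/(1 − e^{−β d₋ E})). In particular the transition rate of an Unruh–DeWitt detector moving with constant velocity v through a β-KMS heat bath of the free massless scalar field equals (1/(4πβγv))·ln((1 − e^{−β d₊ E})/(1 − e^{−β d₋ E})). -/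
open MeasureTheory Real

/-- The function `f_c(s) := −(c/π)·Σ_{n=1}^∞ 1/(n²c² + s²)`. -/
noncomputable def fFun (c s : ℝ) : ℝ :=
  -(c / π) * ∑' n : ℕ, 1 / (((n : ℝ) + 1) ^ 2 * c ^ 2 + s ^ 2)

lemma aux_int_s7 (a : ℝ) (ha : 0 < a) (t : ℝ) :
    Integrable (fun x : ℝ => Complex.exp (t * x * Complex.I) * (Real.exp (-(a * |x|)) : ℂ)) ∧
    ∫ x : ℝ, Complex.exp (t * x * Complex.I) * (Real.exp (-(a * |x|)) : ℂ)
      = ((2 * a / (a ^ 2 + t ^ 2) : ℝ) : ℂ) := by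
  have hI : Set.EqOn (fun x : ℝ => Complex.exp ((-a + t * Complex.I) * x))
      (fun x : ℝ => Complex.exp (t * x * Complex.I) * (Real.exp (-(a * |x|)) : ℂ)) (Set.Ioi 0) := by
    intro x hx
    have hx' : (0:ℝ) < x := hx
    simp only [abs_of_pos hx']
    push_cast
    rw [← Complex.exp_add]
    congr 1; ring
  have hJ : Set.EqOn (fun x : ℝ => Complex.exp ((a + t * Complex.I) * x))
      (fun x : ℝ => Complex.exp (t * x * Complex.I) * (Real.exp (-(a * |x|)) : ℂ)) (Set.Iic 0) := by
    intro x hx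
    have hx' : x ≤ 0 := hx
    simp only [abs_of_nonpos hx']
    push_cast
    rw [← Complex.exp_add]
    congr 1; ring
  have h1 : (-a + t * Complex.I : ℂ).re < 0 := by simpa using ha
  have h2 : 0 < (a + t * Complex.I : ℂ).re := by simpa using ha
  have i1 := (integrableOn_exp_mul_complex_Ioi h1 0).congr_fun hI measurableSet_Ioi
  have i2 := (integrableOn_exp_mul_complex_Iic h2 0).congr_fun hJ measurableSet_Iic
  refine ⟨?_, ?_⟩
  · rw [← integrableOn_univ, ← Set.Iic_union_Ioi (a := (0:ℝ))]
    exact i2.union i1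
  · rw [← intervalIntegral.integral_Iic_add_Ioi i2 i1,
      ← setIntegral_congr_fun measurableSet_Ioi hI, ← setIntegral_congr_fun measurableSet_Iic hJ,
      integral_exp_mul_complex_Ioi h1, integral_exp_mul_complex_Iic h2]
    have n1 : (-a + t * Complex.I : ℂ) ≠ 0 := by
      intro h; rw [h] at h1; simp at h1
    have n2 : (a + t * Complex.I : ℂ) ≠ 0 := by
      intro h; rw [h] at h2; simp at h2
    have n3 : (a ^ 2 + t ^ 2 : ℂ) ≠ 0 := by
      have : a ^ 2 + t ^ 2 ≠ 0 := by positivity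
      exact_mod_cast this
    have e : (a ^ 2 + t ^ 2 : ℂ) = - ((-a + t * Complex.I) * (a + t * Complex.I)) := by
      ring_nf; simp
    push_cast
    rw [e]
    field_simp
    simp
    ring

noncomputable def Lf (c x : ℝ) : ℝ := Real.log (1 - Real.exp (-(c * (2 * π) * |x|)))

lemma Lf_hasSum (c x : ℝ) (hc : 0 < c) (hx : x ≠ 0) :
    HasSum (fun n : ℕ => Real.exp (-(((n:ℝ) + 1) * (c * (2 * π)) * |x|)) / ((n:ℝ) + 1)) (-Lf c x) := by
  have hx' := abs_pos.mpr hx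
  have h := Real.hasSum_pow_div_log_of_abs_lt_one (x := Real.exp (-(c * (2 * π) * |x|))) (by
    rw [abs_of_pos (Real.exp_pos _), Real.exp_lt_one_iff]
    have := Real.pi_pos
    have : 0 < c * (2 * π) * |x| := by positivity
    linarith)
  unfold Lf
  convert h using 3 with n
  rw [← Real.exp_nat_mul]
  push_cast
  congr 1; ring

lemma Lf_fourier (c s : ℝ) (hc : 0 < c) :
    ∫ x : ℝ, Complex.exp ((-(2 * π * s) : ℝ) * x * Complex.I) * (Lf c x : ℂ) = (fFun c s : ℂ) := by
  have hpi := Real.pi_pos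
  set t : ℝ := -(2 * π * s) with ht
  let F : ℕ → ℝ → ℂ := fun n x => (1 / ((n:ℂ) + 1)) *
    (Complex.exp (t * x * Complex.I) * (Real.exp (-((((n:ℝ) + 1) * (c * (2 * π))) * |x|)) : ℂ))
  have hpos : ∀ n : ℕ, 0 < ((n:ℝ) + 1) * (c * (2 * π)) := fun n => by positivity
  have hF_int : ∀ n, Integrable (F n) := fun n =>
    (aux_int_s7 _ (hpos n) t).1.const_mul _
  have hnorm : ∀ n x, ‖F n x‖ = (1 / ((n:ℝ) + 1)) * Real.exp (-((((n:ℝ) + 1) * (c * (2 * π))) * |x|)) := by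
    intro n x
    have e1 : ‖Complex.exp (t * x * Complex.I)‖ = 1 := by
      have := Complex.norm_exp_ofReal_mul_I (t * x)
      simpa using this
    have e2 : ‖(1 / ((n:ℂ) + 1))‖ = 1 / ((n:ℝ) + 1) := by
      have : (1 / ((n:ℂ) + 1)) = ((1 / ((n:ℝ) + 1) : ℝ) : ℂ) := by push_cast; rfl
      rw [this, Complex.norm_of_nonneg (by positivity)]
    simp only [F]
    rw [norm_mul, norm_mul, e1, e2, one_mul, Complex.norm_of_nonneg (Real.exp_pos _).le]
  have hreal : ∀ a : ℝ, 0 < a → ∫ x : ℝ, Real.exp (-(a * |x|)) = 2 / a := by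
    intro a ha
    have := (aux_int_s7 a ha 0).2
    simp only [Complex.ofReal_zero, zero_mul, Complex.exp_zero, one_mul] at this
    rw [integral_complex_ofReal] at this
    have := Complex.ofReal_injective this
    rw [this]; field_simp; simp
  have hsq : Summable (fun n : ℕ => 1 / (((n:ℝ) + 1) ^ 2)) := by
    have := (summable_nat_add_iff 1).mpr (Real.summable_one_div_nat_pow.mpr (one_lt_two))
    simpa using this
  have hF_sum : Summable fun n ↦ ∫ x, ‖F n x‖ := by
    have : (fun n ↦ ∫ x, ‖F n x‖) = fun n : ℕ => (1 / (((n:ℝ) + 1) ^ 2)) * (2 / (c * (2 * π))) := by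
      funext n
      simp_rw [hnorm n]
      rw [integral_const_mul, hreal _ (hpos n)]
      field_simp
    rw [this]
    exact hsq.mul_right _
  have key := hasSum_integral_of_summable_integral_norm hF_int hF_sum
  have e1 : ∫ x : ℝ, (∑' n, F n x) = - ∫ x : ℝ, Complex.exp (t * x * Complex.I) * (Lf c x : ℂ) := by
    rw [← integral_neg]
    apply integral_congr_ae
    have : ∀ᵐ x : ℝ, x ≠ 0 := by simp [ae_iff, measure_singleton]
    filter_upwards [this] with x hx
    have h := Lf_hasSum c x hc hx
    have h' := (Complex.hasSum_ofReal.mpr h).mul_left (Complex.exp (t * x * Complex.I))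
    have : (fun n => F n x) = fun n : ℕ => Complex.exp (t * x * Complex.I) *
      ((Real.exp (-(((n:ℝ) + 1) * (c * (2 * π)) * |x|)) / ((n:ℝ) + 1) : ℝ) : ℂ) := by
      funext n
      simp only [F]
      push_cast
      ring
    rw [this, h'.tsum_eq]
    push_cast; ring
  have e2 : ∀ n, ∫ x, F n x = ((c / π * (1 / (((n : ℝ) + 1) ^ 2 * c ^ 2 + s ^ 2)) : ℝ) : ℂ) := by
    intro n
    simp only [F]
    rw [integral_const_mul, (aux_int_s7 _ (hpos n) t).2]
    have : (1 / ((n:ℂ) + 1)) = ((1 / ((n:ℝ) + 1) : ℝ) : ℂ) := by push_cast; rfl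
    rw [this, ← Complex.ofReal_mul]
    congr 1
    have : 0 < ((n : ℝ) + 1) ^ 2 * c ^ 2 + s ^ 2 := by positivity
    have e : (((n:ℝ) + 1) * (c * (2 * π))) ^ 2 + t ^ 2 = (2 * π) ^ 2 * (((n : ℝ) + 1) ^ 2 * c ^ 2 + s ^ 2) := by
      rw [ht]; ring
    rw [e]
    field_simp
    
  rw [e1] at key
  simp_rw [e2] at key
  have h3 := key.tsum_eq
  rw [← Complex.ofReal_tsum, tsum_mul_left] at h3
  have h4 : ∫ x : ℝ, Complex.exp (t * x * Complex.I) * (Lf c x : ℂ) = -(-∫ x : ℝ, Complex.exp (t * x * Complex.I) * (Lf c x : ℂ)) := by ring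
  rw [h4, ← h3, fFun]
  push_cast; ring

lemma f_summable (c s : ℝ) (hc : 0 < c) :
    Summable (fun n : ℕ => 1 / (((n : ℝ) + 1) ^ 2 * c ^ 2 + s ^ 2)) := by
  have hsq : Summable (fun n : ℕ => 1 / (((n:ℝ) + 1) ^ 2)) := by
    have := (summable_nat_add_iff 1).mpr (Real.summable_one_div_nat_pow.mpr (one_lt_two))
    simpa using this
  refine Summable.of_nonneg_of_le (fun n => by positivity) (fun n => ?_) (hsq.mul_right (1 / c ^ 2))
  rw [one_div_mul_one_div]
  apply one_div_le_one_div_of_le (by positivity)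
  nlinarith [sq_nonneg s]

lemma fFun_zero_neg (c : ℝ) (hc : 0 < c) : fFun c 0 < 0 := by
  have hpi := Real.pi_pos
  have : 0 < ∑' n : ℕ, 1 / (((n : ℝ) + 1) ^ 2 * c ^ 2 + (0:ℝ) ^ 2) :=
    (f_summable c 0 hc).tsum_pos (fun n => by positivity) 0 (by positivity)
  unfold fFun
  have : 0 < c / π := by positivity
  nlinarith [mul_pos this ‹0 < ∑' n : ℕ, 1 / (((n : ℝ) + 1) ^ 2 * c ^ 2 + (0:ℝ) ^ 2)›]

lemma Lf_integrable (c : ℝ) (hc : 0 < c) : Integrable (fun x => (Lf c x : ℂ)) := by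
  have h := Lf_fourier c 0 hc
  simp only [mul_zero, neg_zero, Complex.ofReal_zero, zero_mul, Complex.exp_zero, one_mul] at h
  apply Integrable.of_integral_ne_zero
  rw [h]
  exact_mod_cast (fFun_zero_neg c hc).ne

lemma arctan_bounds (x y : ℝ) (hx : 0 ≤ x) (hxy : x < y) :
    (y - x) / (1 + y ^ 2) ≤ Real.arctan y - Real.arctan x ∧
    Real.arctan y - Real.arctan x ≤ (y - x) / (1 + x ^ 2) := by
  obtain ⟨z, hz, h⟩ := exists_deriv_eq_slope Real.arctan hxy Real.continuous_arctan.continuousOn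
    (Real.differentiable_arctan.differentiableOn)
  have hd : 0 < y - x := by linarith
  rw [eq_div_iff hd.ne', Real.deriv_arctan] at h
  simp only at h
  rw [← h, div_eq_mul_one_div, mul_comm, div_eq_mul_one_div (y - x), mul_comm (y - x)]
  obtain ⟨h1, h2⟩ := hz
  constructor
  · apply mul_le_mul_of_nonneg_right _ hd.le
    apply one_div_le_one_div_of_le (by positivity)
    nlinarith
  · apply mul_le_mul_of_nonneg_right _ hd.le
    apply one_div_le_one_div_of_le (by positivity)
    nlinarith

lemma f_bound (c s : ℝ) (hc : 0 < c) (hs : 0 < s) :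
    0 ≤ fFun c s + 1 / (2 * s) ∧ fFun c s + 1 / (2 * s) ≤ c / (π * s ^ 2) := by
  have hpi := Real.pi_pos
  let A : ℕ → ℝ := fun n => Real.arctan (c * n / s) / s
  let h : ℕ → ℝ := fun n => c / ((n:ℝ) ^ 2 * c ^ 2 + s ^ 2)
  have hb : ∀ n : ℕ, h (n + 1) ≤ A (n + 1) - A n ∧ A (n + 1) - A n ≤ h n := by
    intro n
    have hlt : c * n / s < c * ((n + 1 : ℕ) : ℝ) / s := by
      push_cast; gcongr; linarith
    obtain ⟨h1, h2⟩ := arctan_bounds (c * n / s) (c * ((n + 1 : ℕ) : ℝ) / s) (by positivity) hlt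
    have e : c * ((n + 1 : ℕ) : ℝ) / s - c * n / s = c / s := by push_cast; field_simp; ring
    rw [e] at h1 h2
    have hh : ∀ m : ℕ, h m = (c / s / (1 + (c * m / s) ^ 2)) / s := by
      intro m
      simp only [h]
      have : 0 < (m:ℝ) ^ 2 * c ^ 2 + s ^ 2 := by positivity
      have : 0 < s ^ 2 + c ^ 2 * (m:ℝ) ^ 2 := by positivity
      field_simp
      ring
    simp only [A, hh, ← sub_div]
    constructor <;> gcongr
  have hsum : Summable (fun n => h (n + 1)) := by
    have := (f_summable c s hc).mul_left c
    refine this.congr fun n => ?_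
    simp only [h]; push_cast; ring
  have hsum0 : Summable h := (summable_nat_add_iff 1).mp hsum
  have hlim : Filter.Tendsto A Filter.atTop (nhds (π / 2 / s)) := by
    apply Filter.Tendsto.div_const
    apply (tendsto_nhds_of_tendsto_nhdsWithin Real.tendsto_arctan_atTop).comp
    apply Filter.Tendsto.atTop_div_const hs
    exact Filter.Tendsto.const_mul_atTop hc tendsto_natCast_atTop_atTop
  have hA0 : A 0 = 0 := by simp [A]
  have hAs : HasSum (fun n => A (n + 1) - A n) (π / 2 / s) := by
    rw [hasSum_iff_tendsto_nat_of_nonneg]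
    · simp_rw [Finset.sum_range_sub, hA0, sub_zero]
      exact hlim
    · intro n
      refine le_trans ?_ (hb n).1
      simp only [h]; positivity
  have l1 := hsum.hasSum.tsum_eq ▸ hasSum_le (fun n => (hb n).1) hsum.hasSum hAs
  have l2 := hasSum_le (fun n => (hb n).2) hAs hsum0.hasSum
  rw [hsum0.tsum_eq_zero_add] at l2
  have ef : fFun c s = - (1 / π) * ∑' n, h (n + 1) := by
    have : (fun n => h (n + 1)) = fun n : ℕ => c * (1 / (((n : ℝ) + 1) ^ 2 * c ^ 2 + s ^ 2)) := by
      funext n; simp only [h]; push_cast; ring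
    rw [this, tsum_mul_left, fFun]; ring
  have h0 : h 0 = c / s ^ 2 := by simp [h]
  rw [h0] at l2
  set T := ∑' n, h (n + 1)
  have e2 : fFun c s + 1 / (2 * s) = (1 / π) * (π / 2 / s - T) := by
    rw [ef]; field_simp; ring
  have e3 : c / (π * s ^ 2) = (1 / π) * (c / s ^ 2) := by field_simp
  rw [e2, e3]
  constructor
  · apply mul_nonneg (by positivity); linarith
  · apply mul_le_mul_of_nonneg_left _ (by positivity); linarith

lemma fFun_abs (c s : ℝ) : fFun c s = fFun c |s| := by simp [fFun]

lemma diff_bound (c d s : ℝ) (hc : 0 < c) (hd : 0 < d) :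
    |fFun c s - fFun d s| * s ^ 2 ≤ (c + d) / π := by
  have hpi := Real.pi_pos
  by_cases hs : s = 0
  · subst hs; simp; positivity
  have hs' := abs_pos.mpr hs
  rw [fFun_abs c, fFun_abs d, ← sq_abs s]
  set u := |s|
  obtain ⟨a1, a2⟩ := f_bound c u hc hs'
  obtain ⟨b1, b2⟩ := f_bound d u hd hs'
  have : |fFun c u - fFun d u| ≤ c / (π * u ^ 2) + d / (π * u ^ 2) := by
    rw [abs_le]; constructor <;> linarith
  calc _ ≤ (c / (π * u ^ 2) + d / (π * u ^ 2)) * u ^ 2 := by gcongr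
    _ = _ := by field_simp

lemma Lf_cont (c x : ℝ) (hc : 0 < c) (hx : x ≠ 0) : ContinuousAt (Lf c) x := by
  have hpi := Real.pi_pos
  have hx' := abs_pos.mpr hx
  unfold Lf
  apply ContinuousAt.log
  · fun_prop
  · have : Real.exp (-(c * (2 * π) * |x|)) < 1 := by
      rw [Real.exp_lt_one_iff]
      have : 0 < c * (2 * π) * |x| := by positivity
      linarith
    linarith

open FourierTransform in
lemma main_ft (c d E : ℝ) (hc : 0 < c) (hd : 0 < d) (hE : E ≠ 0) :
    ∫ s : ℝ, Complex.exp (-(Complex.I * E * s)) * ((fFun c s - fFun d s : ℝ) : ℂ)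
      = ((Real.log (1 - Real.exp (-(c * |E|))) - Real.log (1 - Real.exp (-(d * |E|))) : ℝ) : ℂ) := by
  have hpi := Real.pi_pos
  let F : ℝ → ℂ := fun x => (Lf c x : ℂ) - (Lf d x : ℂ)
  have hF : Integrable F := (Lf_integrable c hc).sub (Lf_integrable d hd)
  have hmul : ∀ c : ℝ, 0 < c → ∀ s : ℝ, Integrable fun x : ℝ =>
      Complex.exp ((-(2 * π * s) : ℝ) * x * Complex.I) * (Lf c x : ℂ) := by
    intro c hc s
    refine (Lf_integrable c hc).bdd_mul (c := 1) ?_ ?_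
    · exact Continuous.aestronglyMeasurable (by fun_prop)
    · refine Filter.Eventually.of_forall fun x => ?_
      have := Complex.norm_exp_ofReal_mul_I (-(2 * π * s) * x)
      rw [Complex.ofReal_mul] at this
      exact this.le
  have hFF : 𝓕 F = fun s => ((fFun c s - fFun d s : ℝ) : ℂ) := by
    funext s
    rw [Real.fourier_real_eq_integral_exp_smul]
    have : (fun x : ℝ => Complex.exp (((-2 * π * x * s : ℝ) : ℂ) * Complex.I) • F x) =
        fun x : ℝ => Complex.exp ((-(2 * π * s) : ℝ) * x * Complex.I) * (Lf c x : ℂ)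
          - Complex.exp ((-(2 * π * s) : ℝ) * x * Complex.I) * (Lf d x : ℂ) := by
      funext x
      have : (((-2 * π * x * s : ℝ) : ℂ) * Complex.I) = (-(2 * π * s) : ℝ) * x * Complex.I := by
        push_cast; ring
      rw [this, smul_eq_mul, ← mul_sub]
    rw [this, integral_sub (hmul c hc s) (hmul d hd s), Lf_fourier c s hc, Lf_fourier d s hd]
    push_cast; rfl
  have hcont : Continuous (𝓕 F) :=
    VectorFourier.fourierIntegral_continuous Real.continuous_fourierChar
      (by exact continuous_inner) hF
  have hFi : Integrable (𝓕 F) := by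
    set B := ∫ x, ‖F x‖
    refine (integrable_inv_one_add_sq.const_mul (B + (c + d) / π)).mono'
      hcont.aestronglyMeasurable (Filter.Eventually.of_forall fun s => ?_)
    have h1 : ‖𝓕 F s‖ ≤ B := VectorFourier.norm_fourierIntegral_le_integral_norm _ _ _ _ _
    have h2 : ‖𝓕 F s‖ * s ^ 2 ≤ (c + d) / π := by
      rw [hFF]; simp only [Complex.norm_real, Real.norm_eq_abs]
      exact diff_bound c d s hc hd
    rw [← div_eq_mul_inv, le_div_iff₀ (by positivity)]
    linarith
  have hx : -E / (2 * π) ≠ 0 := by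
    apply div_ne_zero (neg_ne_zero.mpr hE) (by positivity)
  have hinv := hF.fourierInv_fourier_eq hFi (v := -E / (2 * π)) (by
    apply ContinuousAt.sub
    · exact Complex.continuous_ofReal.continuousAt.comp (Lf_cont c _ hc hx)
    · exact Complex.continuous_ofReal.continuousAt.comp (Lf_cont d _ hd hx))
  rw [Real.fourierInv_eq', hFF] at hinv
  have hLf : ∀ c, Lf c (-E / (2 * π)) = Real.log (1 - Real.exp (-(c * |E|))) := by
    intro c
    unfold Lf
    rw [abs_div, abs_neg, abs_of_pos (by positivity : 0 < 2 * π)]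
    congr 4
    field_simp
  simp only [F, hLf] at hinv
  rw [Complex.ofReal_sub, ← hinv]
  congr 1
  funext s
  rw [smul_eq_mul]
  congr 2
  simp
  field_simp

theorem stmt7 (β v E γ dp dm : ℝ) (hβ : 0 < β) (hv1 : -1 < v) (hv2 : v < 1) (hv0 : v ≠ 0)
    (hE : E ≠ 0) (hγ : γ = 1 / Real.sqrt (1 - v ^ 2))
    (hdp : dp = γ * (1 + v)) (hdm : dm = γ * (1 - v)) :
    (∫ s : ℝ, Complex.exp (-(Complex.I * E * s)) *
        (((1 / (4 * π * β * γ * v)) * (fFun (β * dp) s - fFun (β * dm) s) : ℝ) : ℂ))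
      - (((E / (2 * π)) * (if E < 0 then 1 else 0) : ℝ) : ℂ)
      = (((1 / (4 * π * β * γ * v)) *
          Real.log ((1 - Real.exp (-(β * dp * E))) / (1 - Real.exp (-(β * dm * E)))) : ℝ) : ℂ) := by
  have hpi := Real.pi_pos
  have hg : 0 < γ := by
    rw [hγ]
    have : 0 < 1 - v ^ 2 := by nlinarith
    positivity
  have hp : 0 < β * dp := by
    rw [hdp]; exact mul_pos hβ (mul_pos hg (by linarith))
  have hm : 0 < β * dm := by
    rw [hdm]; exact mul_pos hβ (mul_pos hg (by linarith))
  have hdiff : β * dp - β * dm = 2 * β * γ * v := by rw [hdp, hdm]; ring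
  have e : ∀ s : ℝ, Complex.exp (-(Complex.I * E * s)) *
        (((1 / (4 * π * β * γ * v)) * (fFun (β * dp) s - fFun (β * dm) s) : ℝ) : ℂ)
      = ((1 / (4 * π * β * γ * v) : ℝ) : ℂ) * (Complex.exp (-(Complex.I * E * s)) *
        ((fFun (β * dp) s - fFun (β * dm) s : ℝ) : ℂ)) := by
    intro s; rw [Complex.ofReal_mul]; ring
  simp_rw [e]
  rw [integral_const_mul, main_ft _ _ E hp hm hE, ← Complex.ofReal_mul, ← Complex.ofReal_sub]
  congr 1
  generalize β * dp = c at *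
  generalize β * dm = d at *
  rcases lt_or_gt_of_ne hE with h | h
  · have key : ∀ c : ℝ, 0 < c → 1 - Real.exp (-(c * E)) ≠ 0 ∧
        Real.log (1 - Real.exp (-(c * E))) = -(c * E) + Real.log (1 - Real.exp (-(c * |E|))) := by
      intro c hc
      rw [abs_of_neg h]
      have hcE : 0 < -(c * E) := by nlinarith
      have h1 : 1 < Real.exp (-(c * E)) := Real.one_lt_exp_iff.mpr hcE
      have h2 : Real.exp (-(c * -E)) < 1 := by rw [Real.exp_lt_one_iff]; linarith
      refine ⟨by linarith, ?_⟩
      have : Real.exp (-(c * E)) * (1 - Real.exp (-(c * -E))) = - (1 - Real.exp (-(c * E))) := by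
        rw [mul_sub, ← Real.exp_add]; ring_nf; simp; ring
      rw [← Real.log_neg_eq_log (1 - Real.exp (-(c * E))), ← this,
        Real.log_mul (Real.exp_pos _).ne' (by linarith), Real.log_exp]
    rw [Real.log_div (key c hp).1 (key d hm).1, (key c hp).2, (key d hm).2, if_pos h]
    have hd : d = c - 2 * β * γ * v := by linarith
    have : -(c * E) + Real.log (1 - Real.exp (-(c * |E|))) - (-(d * E) + Real.log (1 - Real.exp (-(d * |E|))))
      = (Real.log (1 - Real.exp (-(c * |E|))) - Real.log (1 - Real.exp (-(d * |E|)))) - 2 * β * γ * v * E := by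
      rw [← hdiff]; ring
    rw [this]
    have hg' := hg.ne'
    field_simp
    ring
  · have key : ∀ c : ℝ, 0 < c → 1 - Real.exp (-(c * E)) ≠ 0 := by
      intro c hc
      have : 0 < c * E := by positivity
      have h2 : Real.exp (-(c * E)) < 1 := by rw [Real.exp_lt_one_iff]; linarith
      linarith
    rw [Real.log_div (key c hp) (key d hm), if_neg (by linarith), abs_of_pos h]
    ring
end

section
/- Let β_L, β_R > 0 and define 𝛃(p₁) := β_L if p₁ > 0 and 𝛃(p₁) := β_R if p₁ < 0. Then for every s ∈ ℝ with s ≠ 0, the function p ↦ (1/‖p‖)·cos(‖p‖ s)/(e^{𝛃(p₁)‖p‖} − 1) is integrable on ℝ³ and (2π)^{−3}·∫_{ℝ³} (1/‖p‖)·cos(‖p‖ s)/(e^{𝛃(p₁)‖p‖} − 1) dp = (1/(4π²))·(C_{β_L}(s) + C_{β_R}(s)). -/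
open MeasureTheory Real Set

lemma tsum_sin {z : ℂ} (hz : 0 < z.im) :
    HasSum (fun n : ℤ => 1 / (z + n) ^ 2) ((π:ℂ) ^ 2 / Complex.sin (π * z) ^ 2) := by
  have hz' : z ∈ UpperHalfPlane.upperHalfPlaneSet := hz
  have hsin : Complex.sin (π * z) ≠ 0 := by
    intro h
    rw [Complex.sin_eq_zero_iff] at h
    obtain ⟨k, hk⟩ := h
    have := congrArg Complex.im hk
    simp only [Complex.mul_im, Complex.ofReal_re, Complex.ofReal_im, zero_mul, add_zero,
      Complex.intCast_re, Complex.intCast_im] at this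
    simp only [mul_zero, zero_mul, add_zero] at this
    exact (mul_pos pi_pos hz).ne' this
  have h := iteratedDerivWithin_cot_pi_mul_eq_mul_tsum_div_pow (k := 1) le_rfl hz'
  rw [iteratedDerivWithin_one, derivWithin_of_isOpen UpperHalfPlane.isOpen_upperHalfPlaneSet hz'] at h
  have hd : HasDerivAt (fun x : ℂ ↦ (π:ℂ) * Complex.cot (π * x)) (-((π:ℂ) ^ 2 / Complex.sin (π * z) ^ 2)) z := by
    have h1 : HasDerivAt (fun x : ℂ => (π:ℂ) * x) (π:ℂ) z := by
      simpa using (hasDerivAt_id z).const_mul (π:ℂ)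
    have h2 := ((h1.ccos.div h1.csin hsin).const_mul (π:ℂ))
    refine h2.congr_deriv ?_
    field_simp
    linear_combination (-1 : ℂ) * Complex.sin_sq_add_cos_sq (π * z)
  rw [hd.deriv] at h
  have hs : Summable (fun n : ℤ => 1 / (z + n) ^ 2) := by
    have := EisensteinSeries.linear_right_summable z 1 (k := 2) le_rfl
    refine this.congr fun n => ?_
    simp
  have e : ((π:ℂ) ^ 2 / Complex.sin (π * z) ^ 2) = ∑' n : ℤ, 1 / (z + n) ^ 2 := by
    have := congrArg Neg.neg h
    simpa using this
  rw [e]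
  exact hs.hasSum

lemma hasSum_re {t : ℝ} (ht : 0 < t) :
    HasSum (fun n : ℕ => (((n:ℝ) + 1) ^ 2 - t ^ 2) / (((n:ℝ) + 1) ^ 2 + t ^ 2) ^ 2)
      (1 / (2 * t ^ 2) - π ^ 2 / (2 * sinh (π * t) ^ 2)) := by
  have h := tsum_sin (z := t * Complex.I) (by simpa using ht)
  have h1 := Complex.hasSum_re h
  have e1 : ∀ n : ℤ, (1 / ((t:ℂ) * Complex.I + n) ^ 2).re = ((n:ℝ) ^ 2 - t ^ 2) / ((n:ℝ) ^ 2 + t ^ 2) ^ 2 := by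
    intro n
    rw [one_div, Complex.inv_re]
    congr 1
    · simp [sq]
    · simp [Complex.normSq_apply, sq]
      ring
  have e2 : ((π:ℂ) ^ 2 / Complex.sin (π * (t * Complex.I)) ^ 2).re = -(π ^ 2 / sinh (π * t) ^ 2) := by
    rw [← mul_assoc, Complex.sin_mul_I, mul_pow, Complex.I_sq]
    rw [← Complex.ofReal_mul, ← Complex.ofReal_sinh, ← Complex.ofReal_re (-(π ^ 2 / sinh (π * t) ^ 2))]
    congr 1
    push_cast
    ring
  simp only [e1, e2] at h1
  have h2 := h1.nat_add_neg
  have h3 := (hasSum_nat_add_iff' 1).mpr h2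
  have h4 := h3.div_const 2
  have e3 : ∀ n : ℕ, (((n:ℝ) + 1) ^ 2 - t ^ 2) / (((n:ℝ) + 1) ^ 2 + t ^ 2) ^ 2 =
      (((((n + 1 : ℕ) : ℤ) : ℝ) ^ 2 - t ^ 2) / ((((n + 1 : ℕ) : ℤ) : ℝ) ^ 2 + t ^ 2) ^ 2 +
          (((-((n + 1 : ℕ) : ℤ) : ℤ) : ℝ) ^ 2 - t ^ 2) / (((-((n + 1 : ℕ) : ℤ) : ℤ) : ℝ) ^ 2 + t ^ 2) ^ 2) / 2 := by
    intro n
    push_cast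
    rw [neg_sq]
    ring
  simp_rw [e3]
  rw [show (1 / (2 * t ^ 2) - π ^ 2 / (2 * sinh (π * t) ^ 2)) = _ from ?_]
  · exact h4
  · have := sinh_pos_iff.mpr (mul_pos pi_pos ht)
    simp only [Finset.range_one, Finset.sum_singleton]
    simp only [Nat.cast_zero, Int.cast_zero, neg_zero]
    field_simp
    ring

lemma intg_r {b : ℝ} (hb : 0 < b) : IntegrableOn (fun r : ℝ => r * rexp (-(b * r))) (Ioi 0) := by
  have := integrableOn_rpow_mul_exp_neg_mul_rpow (p := 1) (s := 1) (by norm_num) one_pos hb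
  simpa using this

lemma int_r {b : ℝ} (hb : 0 < b) : ∫ r in Ioi (0:ℝ), r * rexp (-(b * r)) = 1 / b ^ 2 := by
  have := Real.integral_rpow_mul_exp_neg_mul_Ioi (a := 2) (r := b) two_pos hb
  norm_num at this
  rw [this]
  simp

lemma intg_c (s : ℝ) {b : ℝ} (hb : 0 < b) : 
    IntegrableOn (fun r : ℝ => (r : ℂ) * Complex.exp (-((b - s * Complex.I) * r))) (Ioi 0) := by
  refine (intg_r hb).mono' (by fun_prop) ?_
  filter_upwards [ae_restrict_mem measurableSet_Ioi] with r hr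
  have : 0 < r := hr
  simp [Complex.norm_exp, abs_of_pos this]

lemma int_c (s : ℝ) {b : ℝ} (hb : 0 < b) : 
    ∫ r in Ioi (0:ℝ), (r : ℂ) * Complex.exp (-((b - s * Complex.I) * r)) = 1 / (b - s * Complex.I) ^ 2 := by
  set a : ℂ := b - s * Complex.I with ha
  have hare : a.re = b := by simp [ha]
  have ha0 : a ≠ 0 := by
    intro h; rw [h] at hare; simp at hare; exact hb.ne hare
  have hd : ∀ x ∈ Ioi (0:ℝ), HasDerivAt (fun r : ℝ => -((r : ℂ) / a + 1 / a ^ 2) * Complex.exp (-(a * r)))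
      ((x : ℂ) * Complex.exp (-(a * x))) x := by
    intro x _
    have h1 : HasDerivAt (fun r : ℝ => (r : ℂ)) 1 x := Complex.ofRealCLM.hasDerivAt
    have h2 := (((h1.div_const a).add_const (1 / a ^ 2)).neg).mul ((h1.const_mul a).neg.cexp)
    refine h2.congr_deriv ?_
    simp only [Pi.neg_apply]
    field_simp
    ring
  have ht : Filter.Tendsto (fun r : ℝ => -((r : ℂ) / a + 1 / a ^ 2) * Complex.exp (-(a * r))) Filter.atTop (nhds 0) := by
    have t1 : Filter.Tendsto (fun r : ℝ => r * rexp (-b * r)) Filter.atTop (nhds 0) := by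
      have := tendsto_rpow_mul_exp_neg_mul_atTop_nhds_zero 1 b hb
      simpa using this
    have t0 : Filter.Tendsto (fun r : ℝ => rexp (-b * r)) Filter.atTop (nhds 0) := by
      have := tendsto_rpow_mul_exp_neg_mul_atTop_nhds_zero 0 b hb
      simpa using this
    have t2 := (t1.const_mul (1 / ‖a‖)).add (t0.const_mul (1 / ‖a‖ ^ 2))
    simp only [mul_zero, add_zero] at t2
    refine squeeze_zero_norm' ?_ t2
    filter_upwards [Filter.eventually_gt_atTop 0] with r hr
    rw [norm_mul, norm_neg, Complex.norm_exp]
    have e : (-(a * r)).re = -b * r := by simp [hare]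
    rw [e]
    have : ‖(r : ℂ) / a + 1 / a ^ 2‖ ≤ r / ‖a‖ + 1 / ‖a‖ ^ 2 := by
      refine (norm_add_le _ _).trans ?_
      simp [abs_of_pos hr]
    calc _ ≤ (r / ‖a‖ + 1 / ‖a‖ ^ 2) * rexp (-b * r) := by gcongr
      _ = _ := by ring
  have := integral_Ioi_of_hasDerivAt_of_tendsto (a := (0:ℝ)) (by fun_prop) hd (intg_c s hb) ht
  rw [this]
  simp

lemma intg_cos (s : ℝ) {b : ℝ} (hb : 0 < b) : 
    IntegrableOn (fun r : ℝ => r * cos (r * s) * rexp (-(b * r))) (Ioi 0) := by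
  refine (intg_r hb).mono' (by fun_prop) ?_
  filter_upwards [ae_restrict_mem measurableSet_Ioi] with r hr
  have : 0 < r := hr
  rw [norm_mul, norm_mul, norm_of_nonneg this.le, norm_of_nonneg (exp_pos _).le]
  gcongr
  exact mul_le_of_le_one_right this.le (abs_cos_le_one _)

lemma int_cos_s8 (s : ℝ) {b : ℝ} (hb : 0 < b) : 
    ∫ r in Ioi (0:ℝ), r * cos (r * s) * rexp (-(b * r)) = (b ^ 2 - s ^ 2) / (b ^ 2 + s ^ 2) ^ 2 := by
  have h := congrArg Complex.re (int_c s hb)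
  have h' := integral_re (intg_c s hb)
  simp only [RCLike.re_to_complex] at h'
  rw [← h'] at h
  have e : ∀ r : ℝ, ((r : ℂ) * Complex.exp (-((b - s * Complex.I) * r))).re = r * cos (r * s) * rexp (-(b * r)) := by
    intro r
    simp [Complex.exp_re]
    ring_nf
  simp_rw [e] at h
  rw [h, one_div, Complex.inv_re]
  congr 1
  · simp [sq]
  · simp [Complex.normSq_apply, sq]
    ring

lemma int_planck (s : ℝ) {β : ℝ} (hβ : 0 < β) : 
    IntegrableOn (fun r : ℝ => r * cos (r * s) / (rexp (β * r) - 1)) (Ioi 0) ∧ 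
    HasSum (fun n : ℕ => ((((n:ℝ) + 1) * β) ^ 2 - s ^ 2) / ((((n:ℝ) + 1) * β) ^ 2 + s ^ 2) ^ 2)
      (∫ r in Ioi (0:ℝ), r * cos (r * s) / (rexp (β * r) - 1)) := by
  have hb : ∀ n : ℕ, 0 < ((n:ℝ) + 1) * β := fun n => by positivity
  have hsum : Summable fun n : ℕ => 1 / (((n:ℝ) + 1) * β) ^ 2 := by
    have := (summable_nat_add_iff 1).mpr (Real.summable_one_div_nat_pow.mpr (one_lt_two))
    refine (this.mul_right (1 / β ^ 2)).congr fun n => ?_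
    push_cast
    rw [mul_pow]
    field_simp
  have hgeo : ∀ r : ℝ, 0 < r → HasSum (fun n : ℕ => rexp (-(((n:ℝ) + 1) * β * r))) (1 / (rexp (β * r) - 1)) := by
    intro r hr
    have h1 : rexp (-(β * r)) < 1 := by rw [exp_lt_one_iff]; nlinarith
    have h := (hasSum_geometric_of_lt_one (exp_pos _).le h1).mul_left (rexp (-(β * r)))
    have e : ∀ n : ℕ, rexp (-(((n:ℝ) + 1) * β * r)) = rexp (-(β * r)) * rexp (-(β * r)) ^ n := by
      intro n
      rw [← exp_nat_mul, ← exp_add]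
      ring_nf
    simp_rw [e]
    have h2 : 1 < rexp (β * r) := by rw [one_lt_exp_iff]; positivity
    rw [show 1 / (rexp (β * r) - 1) = rexp (-(β * r)) * (1 - rexp (-(β * r)))⁻¹ from ?_]
    · exact h
    · rw [exp_neg]
      have h3 : rexp (β * r) - 1 ≠ 0 := by linarith
      have h5 : 1 - (rexp (β * r))⁻¹ = (rexp (β * r) - 1) / rexp (β * r) := by field_simp
      rw [h5]
      field_simp
  have hG0 : ∀ r : ℝ, 0 < r → HasSum (fun n : ℕ => r * cos (r * s) * rexp (-(((n:ℝ) + 1) * β * r))) (r * cos (r * s) / (rexp (β * r) - 1)) := by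
    intro r hr
    have := (hgeo r hr).mul_left (r * cos (r * s))
    rwa [mul_one_div] at this
  have hns : Summable fun n : ℕ => ∫ r in Ioi (0:ℝ), ‖r * cos (r * s) * rexp (-(((n:ℝ) + 1) * β * r))‖ := by
    refine hsum.of_nonneg_of_le (fun n => integral_nonneg fun _ => norm_nonneg _) fun n => ?_
    rw [← int_r (hb n)]
    refine setIntegral_mono_on (intg_cos s (hb n)).norm (intg_r (hb n)) measurableSet_Ioi ?_
    intro r hr
    have : 0 < r := hr
    rw [norm_mul, norm_mul, norm_of_nonneg this.le, norm_of_nonneg (exp_pos _).le]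
    gcongr
    exact mul_le_of_le_one_right this.le (abs_cos_le_one _)
  constructor
  · skip
    have hbd : IntegrableOn (fun r : ℝ => (1 / β) * rexp (-(β / 2) * r)) (Ioi 0) :=
      (exp_neg_integrableOn_Ioi 0 (by positivity)).const_mul _
    refine hbd.mono' (Measurable.aestronglyMeasurable (by fun_prop)) ?_
    filter_upwards [ae_restrict_mem measurableSet_Ioi] with r hr
    have hr : 0 < r := hr
    have h2 : 1 < rexp (β * r) := by rw [one_lt_exp_iff]; positivity
    have h3 : 0 < rexp (β * r) - 1 := by linarith
    rw [norm_div, norm_mul, norm_of_nonneg hr.le, norm_of_nonneg h3.le, div_le_iff₀ h3]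
    have h4 : r * ‖cos (r * s)‖ ≤ r := mul_le_of_le_one_right hr.le (abs_cos_le_one _)
    refine h4.trans ?_
    have e1 : rexp (β * r) = rexp (β / 2 * r) ^ 2 := by rw [← exp_nat_mul]; congr 1; push_cast; ring
    have e2 : rexp (-(β / 2) * r) = (rexp (β / 2 * r))⁻¹ := by rw [← exp_neg]; congr 1; ring
    rw [e1, e2]
    have h5 : β / 2 * r ≤ sinh (β / 2 * r) := self_le_sinh_iff.mpr (by positivity)
    rw [sinh_eq, exp_neg] at h5
    have h6 := exp_pos (β / 2 * r)
    set x := rexp (β / 2 * r)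
    have e3 : 1 / β * x⁻¹ * (x ^ 2 - 1) = (x - x⁻¹) / β := by field_simp
    rw [e3, le_div_iff₀ hβ]
    linarith
  · have := hasSum_integral_of_summable_integral_norm (μ := volume.restrict (Ioi (0:ℝ))) (fun n => intg_cos s (hb n)) hns
    simp_rw [fun n => int_cos_s8 s (hb n)] at this
    rw [setIntegral_congr_fun measurableSet_Ioi (fun r hr => (hG0 r hr).tsum_eq)] at this
    exact this

lemma half_integral (g : EuclideanSpace ℝ (Fin 3) → ℝ) (hg : Integrable g) (hneg : ∀ p, g (-p) = g p) :
    ∫ p in {p : EuclideanSpace ℝ (Fin 3) | 0 < p 0}, g p = (∫ p, g p) / 2 ∧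
    ∫ p in {p : EuclideanSpace ℝ (Fin 3) | 0 < p 0}ᶜ, g p = (∫ p, g p) / 2 := by
  set S : Set (EuclideanSpace ℝ (Fin 3)) := {p | 0 < p 0} with hS
  have hmeas : MeasurableSet S := measurableSet_lt measurable_const (by fun_prop)
  have h1 := integral_add_compl hmeas hg
  have hnull : volume {p : EuclideanSpace ℝ (Fin 3) | p 0 = 0} = 0 := by
    let L : Submodule ℝ (EuclideanSpace ℝ (Fin 3)) :=
      LinearMap.ker (EuclideanSpace.proj (0 : Fin 3) : EuclideanSpace ℝ (Fin 3) →L[ℝ] ℝ).toLinearMap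
    have hL : L ≠ ⊤ := by
      intro h
      have : EuclideanSpace.single (0 : Fin 3) (1 : ℝ) ∈ L := h ▸ Submodule.mem_top
      simp [L] at this
    have := Measure.addHaar_submodule volume L hL
    have hLS : {p : EuclideanSpace ℝ (Fin 3) | p 0 = 0} = (L : Set (EuclideanSpace ℝ (Fin 3))) := by
      ext p
      simp [L]
    rw [hLS]
    exact this
  have hae : (Sᶜ : Set (EuclideanSpace ℝ (Fin 3))) =ᵐ[volume] (Neg.neg ⁻¹' S : Set (EuclideanSpace ℝ (Fin 3))) := by
    have : ∀ᵐ p : EuclideanSpace ℝ (Fin 3), ¬ (p 0 = 0) := by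
      rw [ae_iff]; simpa using hnull
    filter_upwards [this] with p hp
    refine propext ?_
    change (¬ (0 < p 0)) ↔ 0 < (-p) 0
    simp only [PiLp.neg_apply, Left.neg_pos_iff, not_lt]
    exact ⟨fun h => lt_of_le_of_ne h hp, le_of_lt⟩
  have h2 : ∫ p in Sᶜ, g p = ∫ p in S, g p := by
    rw [setIntegral_congr_set hae]
    have := (Measure.measurePreserving_neg (volume : Measure (EuclideanSpace ℝ (Fin 3)))).setIntegral_preimage_emb
      (Homeomorph.neg _).measurableEmbedding g S
    simp only [hneg] at this
    exact this
  constructor <;> linarith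

lemma radial (β s : ℝ) (hβ : 0 < β) (hs : s ≠ 0) :
    Integrable (fun p : EuclideanSpace ℝ (Fin 3) => (1 / ‖p‖) * cos (‖p‖ * s) / (rexp (β * ‖p‖) - 1)) ∧
    ∫ p : EuclideanSpace ℝ (Fin 3), (1 / ‖p‖) * cos (‖p‖ * s) / (rexp (β * ‖p‖) - 1) = 4 * π * Cfun β s := by
  obtain ⟨hi, hsum⟩ := int_planck s hβ
  have he : ∀ y ∈ Ioi (0:ℝ), y * cos (y * s) / (rexp (β * y) - 1) =
      y ^ (Module.finrank ℝ (EuclideanSpace ℝ (Fin 3)) - 1) • ((1 / y) * cos (y * s) / (rexp (β * y) - 1)) := by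
    intro y hy
    have : y ≠ 0 := ne_of_gt hy
    simp only [finrank_euclideanSpace, Fintype.card_fin, smul_eq_mul]
    norm_num
    field_simp
  refine ⟨?_, ?_⟩
  · refine (integrable_fun_norm_addHaar volume (f := fun y => (1 / y) * cos (y * s) / (rexp (β * y) - 1))).mpr ?_
    exact hi.congr_fun he measurableSet_Ioi
  · rw [integral_fun_norm_addHaar volume (fun y => (1 / y) * cos (y * s) / (rexp (β * y) - 1)),
      ← setIntegral_congr_fun measurableSet_Ioi he]
    have hv : volume.real (Metric.ball (0 : EuclideanSpace ℝ (Fin 3)) 1) = π * 4 / 3 := by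
      rw [Measure.real, EuclideanSpace.volume_ball_fin_three]
      simp [pi_pos.le, ENNReal.toReal_ofReal (show 0 ≤ π * 4 / 3 by positivity)]
    have ht : 0 < |s| / β := by positivity
    have h1 := (hasSum_re ht).div_const (β ^ 2)
    have e : ∀ n : ℕ, ((((n:ℝ) + 1) * β) ^ 2 - s ^ 2) / ((((n:ℝ) + 1) * β) ^ 2 + s ^ 2) ^ 2 =
        (((n:ℝ) + 1) ^ 2 - (|s| / β) ^ 2) / (((n:ℝ) + 1) ^ 2 + (|s| / β) ^ 2) ^ 2 / β ^ 2 := by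
      intro n
      rw [div_pow, sq_abs]
      have h3 : 0 < (((n:ℝ) + 1) * β) ^ 2 + s ^ 2 := by positivity
      have h4 : 0 < ((n:ℝ) + 1) ^ 2 + s ^ 2 / β ^ 2 := by positivity
      have e1 : ((n:ℝ) + 1) ^ 2 + s ^ 2 / β ^ 2 = ((((n:ℝ) + 1) * β) ^ 2 + s ^ 2) / β ^ 2 := by field_simp
      have e2 : ((n:ℝ) + 1) ^ 2 - s ^ 2 / β ^ 2 = ((((n:ℝ) + 1) * β) ^ 2 - s ^ 2) / β ^ 2 := by field_simp
      rw [e1, e2]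
      field_simp
    simp_rw [e] at hsum
    have hI := hsum.unique h1
    rw [hI, hv, Cfun, if_neg hs]
    have hsq : sinh (π * (|s| / β)) ^ 2 = sinh (π * s / β) ^ 2 := by
      rcases abs_choice s with h | h <;> rw [h]
      · rw [mul_div_assoc]
      · rw [neg_div, mul_neg, sinh_neg, neg_sq, mul_div_assoc]
    rw [hsq, div_pow, sq_abs]
    have hsh : sinh (π * s / β) ≠ 0 := by
      rw [Ne, sinh_eq_zero]
      have := pi_ne_zero
      positivity
    simp only [finrank_euclideanSpace, Fintype.card_fin, smul_eq_mul, nsmul_eq_mul]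
    push_cast
    field_simp

/-- The vacuum-subtracted NESS two-point function along a static worldline:
with `𝛃(p₁) = β_L` for `p₁ > 0` and `β_R` for `p₁ < 0`, for `s ≠ 0` the integrand is
integrable on `ℝ³` and
`(2π)^{-3} ∫_{ℝ³} (1/‖p‖)·cos(‖p‖s)/(e^{𝛃(p₁)‖p‖} − 1) dp
  = (1/(4π²))·(C_{β_L}(s) + C_{β_R}(s))`. -/
theorem stmt8 (βL βR s : ℝ) (hL : 0 < βL) (hR : 0 < βR) (hs : s ≠ 0) :
    Integrable (fun p : EuclideanSpace ℝ (Fin 3) =>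
      (1 / ‖p‖) * Real.cos (‖p‖ * s) /
        (Real.exp ((if 0 < p 0 then βL else βR) * ‖p‖) - 1)) ∧
    ((2 * π) ^ 3)⁻¹ * ∫ p : EuclideanSpace ℝ (Fin 3),
        (1 / ‖p‖) * Real.cos (‖p‖ * s) /
          (Real.exp ((if 0 < p 0 then βL else βR) * ‖p‖) - 1)
      = (1 / (4 * π ^ 2)) * (Cfun βL s + Cfun βR s) := by
  set S : Set (EuclideanSpace ℝ (Fin 3)) := {p | 0 < p 0} with hS
  have hmeas : MeasurableSet S := measurableSet_lt measurable_const (by fun_prop)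
  obtain ⟨iL, eL⟩ := radial βL s hL hs
  obtain ⟨iR, eR⟩ := radial βR s hR hs
  have hL2 := (half_integral _ iL (by simp)).1
  have hR2 := (half_integral _ iR (by simp)).2
  rw [eL] at hL2
  rw [eR] at hR2
  set F := fun p : EuclideanSpace ℝ (Fin 3) =>
      (1 / ‖p‖) * Real.cos (‖p‖ * s) /
        (Real.exp ((if 0 < p 0 then βL else βR) * ‖p‖) - 1) with hF
  have c1 : ∀ p ∈ S, (1 / ‖p‖) * Real.cos (‖p‖ * s) / (Real.exp (βL * ‖p‖) - 1) = F p := by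
    intro p hp
    have hp : 0 < p 0 := hp
    simp only [hF, if_pos hp]
  have c2 : ∀ p ∈ Sᶜ, (1 / ‖p‖) * Real.cos (‖p‖ * s) / (Real.exp (βR * ‖p‖) - 1) = F p := by
    intro p hp
    have hp : ¬ 0 < p 0 := hp
    simp only [hF, if_neg hp]
  have hi : Integrable F := by
    rw [← integrableOn_univ, ← union_compl_self S]
    exact (iL.integrableOn.congr_fun c1 hmeas).union (iR.integrableOn.congr_fun c2 hmeas.compl)
  refine ⟨hi, ?_⟩
  rw [← integral_add_compl hmeas hi, ← setIntegral_congr_fun hmeas c1,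
    ← setIntegral_congr_fun hmeas.compl c2, hL2, hR2]
  field_simp
  ring
end

section
/- Let β_L, β_R > 0, v ∈ (−1,1) with v ≠ 0, γ := 1/√(1 − v²), d₊ := γ(1 + v), d₋ := γ(1 − v), and 𝛃(p₁) := β_L if p₁ > 0, β_R if p₁ < 0. Then for every s ∈ ℝ with s ≠ 0, the function p ↦ (1/‖p‖)·cos(p₁ γ v s − ‖p‖ γ s)/(e^{𝛃(p₁)‖p‖} − 1) is integrable on ℝ³ and (2π)^{−3}·∫_{ℝ³} (1/‖p‖)·cos(p₁ γ v s − ‖p‖ γ s)/(e^{𝛃(p₁)‖p‖} − 1) dp = 1/(4π² s²) + (1/(8πγvβ_R s))·[coth(π s/(β_R d₋)) − coth(πγ s/β_R)] − (1/(8πγvβ_L s))·[coth(π s/(β_L d₊)) − coth(πγ s/β_L)]. -/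
open MeasureTheory Real Set

lemma polar_lint (G : ℝ → ENNReal) (hG : Measurable G) :
    ∫⁻ p : ℝ × ℝ, G (Real.sqrt (p.1 ^ 2 + p.2 ^ 2))
      = ENNReal.ofReal (2 * π) * ∫⁻ ρ in Ioi (0:ℝ), ENNReal.ofReal ρ * G ρ := by
  rw [← lintegral_comp_polarCoord_symm, polarCoord_target]
  have h1 : ∫⁻ p in Ioi (0:ℝ) ×ˢ Ioo (-π) π, ENNReal.ofReal p.1 •
      G (Real.sqrt ((polarCoord.symm p).1 ^ 2 + (polarCoord.symm p).2 ^ 2))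
      = ∫⁻ p in Ioi (0:ℝ) ×ˢ Ioo (-π) π, ENNReal.ofReal p.1 * G p.1 := by
    apply setLIntegral_congr_fun (measurableSet_Ioi.prod measurableSet_Ioo)
    intro p hp
    have hp1 : 0 < p.1 := hp.1
    simp only [polarCoord_symm_apply, smul_eq_mul]
    congr 2
    rw [show (p.1 * cos p.2) ^ 2 + (p.1 * sin p.2) ^ 2
      = p.1 ^ 2 * (sin p.2 ^ 2 + cos p.2 ^ 2) by ring, sin_sq_add_cos_sq, mul_one,
      Real.sqrt_sq hp1.le]
  rw [h1, Measure.volume_eq_prod, ← Measure.prod_restrict, lintegral_prod _ (by fun_prop)]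
  simp only [lintegral_const, MeasurableSet.univ, Measure.restrict_apply, univ_inter,
    Real.volume_Ioo]
  rw [lintegral_mul_const _ (by fun_prop), mul_comm]
  congr 2
  ring

lemma radial_lint (x : ℝ) (G : ℝ → ENNReal) :
    ∫⁻ ρ in Ioi (0:ℝ), ENNReal.ofReal ρ * G (Real.sqrt (x ^ 2 + ρ ^ 2))
      = ∫⁻ r in Ioi |x|, ENNReal.ofReal r * G r := by
  have himg : (fun ρ : ℝ => Real.sqrt (x ^ 2 + ρ ^ 2)) '' Ioi 0 = Ioi |x| := by
    ext r
    constructor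
    · rintro ⟨ρ, hρ, rfl⟩
      have hρ' : 0 < ρ := hρ
      show |x| < _
      apply Real.lt_sqrt_of_sq_lt
      rw [sq_abs]; nlinarith
    · intro hr
      have hr' : |x| < r := hr
      have h0 : 0 ≤ |x| := abs_nonneg x
      have : 0 < r ^ 2 - x ^ 2 := by rw [← sq_abs x]; nlinarith
      refine ⟨Real.sqrt (r ^ 2 - x ^ 2), Real.sqrt_pos.2 this, ?_⟩
      simp only
      rw [Real.sq_sqrt this.le, add_sub_cancel, Real.sqrt_sq (by linarith)]
  rw [← himg, lintegral_image_eq_lintegral_abs_deriv_mul measurableSet_Ioi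
    (f' := fun ρ => ρ / Real.sqrt (x ^ 2 + ρ ^ 2))]
  · apply setLIntegral_congr_fun measurableSet_Ioi
    intro ρ hρ
    have hρ' : 0 < ρ := hρ
    have h2 : 0 < Real.sqrt (x ^ 2 + ρ ^ 2) := Real.sqrt_pos.2 (by positivity)
    simp only
    rw [← mul_assoc, ← ENNReal.ofReal_mul (abs_nonneg _), abs_of_pos (by positivity),
      div_mul_cancel₀ _ h2.ne']
  · intro ρ hρ
    have hρ' : 0 < ρ := hρ
    have h2 : x ^ 2 + ρ ^ 2 ≠ 0 := by positivity
    have h3 : Real.sqrt (x ^ 2 + ρ ^ 2) ≠ 0 := (Real.sqrt_pos.2 (by positivity)).ne'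
    have := (((hasDerivAt_id ρ).pow 2).const_add (x ^ 2)).sqrt h2
    refine HasDerivAt.hasDerivWithinAt ?_
    refine HasDerivAt.congr_deriv (f := fun ρ => Real.sqrt (x ^ 2 + ρ ^ 2)) this ?_
    simp
    field_simp
  · intro a ha b hb hab
    have ha' : 0 < a := ha
    have hb' : 0 < b := hb
    simp only at hab
    have := (Real.sqrt_inj (by positivity) (by positivity)).1 hab
    nlinarith

lemma ball_lint (F : ℝ × ℝ → ENNReal) (hF : Measurable F) :
    ∫⁻ p : EuclideanSpace ℝ (Fin 3), F (‖p‖, p 0)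
      = ∫⁻ z in {z : ℝ × ℝ | |z.2| < z.1}, ENNReal.ofReal (2 * π * z.1) * F z := by
  have hS : MeasurableSet {z : ℝ × ℝ | |z.2| < z.1} :=
    measurableSet_lt (by fun_prop) (by fun_prop)
  have e1 := (PiLp.volume_preserving_ofLp (Fin 3))
  have e2 := volume_preserving_piFinSuccAbove (fun _ : Fin 3 => ℝ) 0
  have e3 := (MeasurePreserving.id (volume : Measure ℝ)).prod (volume_preserving_finTwoArrow ℝ)
  have e := e3.comp (e2.comp e1)
  have key := e.lintegral_comp (f := fun q : ℝ × (ℝ × ℝ) =>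
    F (Real.sqrt (q.1 ^ 2 + (Real.sqrt (q.2.1 ^ 2 + q.2.2 ^ 2)) ^ 2), q.1)) (by fun_prop)
  have hl : ∀ p : EuclideanSpace ℝ (Fin 3), F (‖p‖, p 0) = (fun q : ℝ × (ℝ × ℝ) =>
    F (Real.sqrt (q.1 ^ 2 + (Real.sqrt (q.2.1 ^ 2 + q.2.2 ^ 2)) ^ 2), q.1))
      ((Prod.map id (MeasurableEquiv.finTwoArrow (α := ℝ)) ∘
        (MeasurableEquiv.piFinSuccAbove (fun _ : Fin 3 => ℝ) 0) ∘ WithLp.ofLp) p) := by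
    intro p
    simp only [Function.comp_apply, Prod.map]
    have : ‖p‖ = Real.sqrt (p 0 ^ 2 + (Real.sqrt (p 1 ^ 2 + p 2 ^ 2)) ^ 2) := by
      rw [EuclideanSpace.norm_eq, Real.sq_sqrt (by positivity)]
      simp [Fin.sum_univ_three, add_assoc]
    rw [this]
    rfl
  simp_rw [hl]
  rw [key, lintegral_prod _ (by fun_prop)]
  have h2 : ∀ x : ℝ, ∫⁻ y : ℝ × ℝ,
      F (Real.sqrt (x ^ 2 + (Real.sqrt (y.1 ^ 2 + y.2 ^ 2)) ^ 2), x)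
      = ∫⁻ r : ℝ, {z : ℝ × ℝ | |z.2| < z.1}.indicator
          (fun z => ENNReal.ofReal (2 * π * z.1) * F z) (r, x) := by
    intro x
    rw [polar_lint (fun t => F (Real.sqrt (x ^ 2 + t ^ 2), x)) (by fun_prop),
      radial_lint x (fun t => F (t, x)), ← lintegral_const_mul _ (by fun_prop),
      ← lintegral_indicator measurableSet_Ioi]
    apply lintegral_congr
    intro r
    simp only [indicator, mem_Ioi, mem_ofPred_eq]
    split_ifs
    · rw [ENNReal.ofReal_mul (p := 2 * π) (by positivity), mul_assoc]
    · rfl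
  simp_rw [h2]
  rw [← lintegral_indicator hS, Measure.volume_eq_prod, lintegral_prod_symm]
  exact (Measurable.indicator (by fun_prop) hS).aemeasurable

lemma map_ball : (volume : Measure (EuclideanSpace ℝ (Fin 3))).map (fun p => (‖p‖, p 0))
    = (volume.restrict {z : ℝ × ℝ | |z.2| < z.1}).withDensity
        (fun z => ENNReal.ofReal (2 * π * z.1)) := by
  have hm : Measurable (fun p : EuclideanSpace ℝ (Fin 3) => (‖p‖, p 0)) := by fun_prop
  ext A hA
  rw [← lintegral_indicator_one hA, ← lintegral_indicator_one hA,
    lintegral_map (measurable_one.indicator hA) hm,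
    lintegral_withDensity_eq_lintegral_mul _ (by fun_prop) (measurable_one.indicator hA),
    ball_lint _ (measurable_one.indicator hA)]
  rfl

lemma exp_lower {β r : ℝ} (hβ : 0 < β) (hr : 0 < r) :
    exp (β / 2 * r) * (β * r) ≤ exp (β * r) - 1 := by
  have h : β / 2 * r ≤ sinh (β / 2 * r) := Real.self_le_sinh_iff.2 (by positivity)
  have h2 : exp (β * r) - 1 = exp (β / 2 * r) * (2 * sinh (β / 2 * r)) := by
    rw [Real.sinh_eq]
    have e1 : exp (β * r) = exp (β / 2 * r) * exp (β / 2 * r) := by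
      rw [← Real.exp_add]; ring_nf
    have e2 : exp (β / 2 * r) * exp (-(β / 2 * r)) = 1 := by
      rw [← Real.exp_add]; simp
    rw [e1]; linear_combination e2
  rw [h2]
  exact mul_le_mul_of_nonneg_left (by linarith) (exp_pos _).le

lemma integrable_planck {β : ℝ} (hβ : 0 < β) :
    IntegrableOn (fun r => r / (exp (β * r) - 1)) (Ioi 0) := by
  have h1 : IntegrableOn (fun r => β⁻¹ * exp (-(β / 2) * r)) (Ioi 0) :=
    (integrableOn_exp_mul_Ioi (by linarith) 0).const_mul _
  refine Integrable.mono' h1 (Measurable.aestronglyMeasurable (by fun_prop)) ?_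
  refine (ae_restrict_iff' measurableSet_Ioi).2 (.of_forall fun r hr => ?_)
  have hr' : 0 < r := hr
  have h := exp_lower hβ hr'
  have h0 : 0 < exp (β / 2 * r) * (β * r) := by positivity
  rw [Real.norm_of_nonneg (div_nonneg hr'.le (h0.le.trans h))]
  calc r / (exp (β * r) - 1) ≤ r / (exp (β / 2 * r) * (β * r)) := by gcongr
    _ = β⁻¹ * exp (-(β / 2) * r) := by
      rw [neg_mul, Real.exp_neg]; field_simp

lemma integrable_sin_exp {c : ℝ} (hc : 0 < c) (a : ℝ) :
    IntegrableOn (fun r => exp (-c * r) * sin (a * r)) (Ioi 0) := by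
  refine Integrable.mono' (integrableOn_exp_mul_Ioi (neg_lt_zero.2 hc) 0) 
    (by fun_prop) (.of_forall fun r => ?_)
  rw [norm_mul, Real.norm_of_nonneg (exp_pos _).le]
  exact mul_le_of_le_one_right (exp_pos _).le (abs_sin_le_one _)

lemma integral_sin_exp {c : ℝ} (hc : 0 < c) (a : ℝ) :
    ∫ r in Ioi 0, exp (-c * r) * sin (a * r) = a / (c ^ 2 + a ^ 2) := by
  have hd : 0 < c ^ 2 + a ^ 2 := by positivity
  have := integral_Ioi_of_hasDerivAt_of_tendsto (a := 0) (m := 0)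
    (f := fun r => exp (-c * r) * (-(c * sin (a * r) + a * cos (a * r)) / (c ^ 2 + a ^ 2)))
    (f' := fun r => exp (-c * r) * sin (a * r)) (by fun_prop) ?_
    (integrable_sin_exp hc a) ?_
  · rw [this]; simp; ring
  · intro r _
    have h1 : HasDerivAt (fun r : ℝ => -c * r) (-c) r := by
      simpa using (hasDerivAt_id r).const_mul (-c)
    have h2 : HasDerivAt (fun r : ℝ => a * r) a r := by
      simpa using (hasDerivAt_id r).const_mul a
    refine HasDerivAt.congr_deriv (h1.exp.mul
      ((((h2.sin.const_mul c).add (h2.cos.const_mul a)).neg).div_const (c ^ 2 + a ^ 2))) ?_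
    field_simp
    ring
  · apply Filter.Tendsto.zero_mul_isBoundedUnder_le
    · have := (Filter.tendsto_id (α := ℝ) (x := Filter.atTop)).const_mul_atTop hc
      refine (Real.tendsto_exp_neg_atTop_nhds_zero.comp this).congr fun r => ?_
      simp
    · refine Filter.isBoundedUnder_of ⟨(|c| + |a|) / (c ^ 2 + a ^ 2), fun r => ?_⟩
      rw [Function.comp_apply, norm_div, norm_neg, Real.norm_eq_abs, Real.norm_eq_abs,
        abs_of_pos hd]
      gcongr
      refine (abs_add_le _ _).trans ?_
      rw [abs_mul, abs_mul]
      exact add_le_add (mul_le_of_le_one_right (abs_nonneg _) (abs_sin_le_one _))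
        (mul_le_of_le_one_right (abs_nonneg _) (abs_cos_le_one _))

lemma integrable_mul_exp {c : ℝ} (hc : 0 < c) :
    IntegrableOn (fun r => r * exp (-(c * r))) (Ioi 0) := by
  have := integrableOn_rpow_mul_exp_neg_mul_rpow (p := 1) (s := 1) (b := c) (by norm_num)
    (by norm_num) hc
  simpa using this

lemma integral_mul_exp {c : ℝ} (hc : 0 < c) :
    ∫ r in Ioi 0, r * exp (-(c * r)) = 1 / c ^ 2 := by
  have := Real.integral_rpow_mul_exp_neg_mul_Ioi (a := 2) (r := c) (by norm_num) hc
  have h2 : Real.Gamma 2 = 1 := by simp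
  norm_num [h2] at this
  simpa using this

lemma coth_series {y : ℝ} (hy : y ≠ 0) :
    ∑' n : ℕ, y / (((n:ℝ) + 1) ^ 2 + y ^ 2) = π / 2 * coth (π * y) - 1 / (2 * y) := by
  have hz : (y * Complex.I : ℂ) ∈ Complex.integerComplement := by
    rintro ⟨n, hn⟩
    have := congrArg Complex.im hn
    simp at this
    exact hy this.symm
  have h := cot_series_rep' hz
  have hyc : (y : ℂ) ≠ 0 := by exact_mod_cast hy
  have hsinh : (Real.sinh (π * y)) ≠ 0 := by
    rw [Ne, Real.sinh_eq_zero]; positivity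
  have hcot : Complex.cot (π * (y * Complex.I)) = -Complex.I * (coth (π * y) : ℝ) := by
    rw [Complex.cot, ← mul_assoc, Complex.cos_mul_I, Complex.sin_mul_I, coth]
    push_cast
    have hs' : Complex.sinh (π * y) ≠ 0 := by exact_mod_cast hsinh
    field_simp
    simp
  have ht : ∀ n : ℕ, (1 / ((y * Complex.I : ℂ) - (n + 1)) + 1 / ((y * Complex.I : ℂ) + (n + 1)))
      = (-2 * Complex.I) * ((y / (((n:ℝ) + 1) ^ 2 + y ^ 2) : ℝ) : ℂ) := by
    intro n
    have a1 : (y * Complex.I : ℂ) - (n + 1) ≠ 0 := by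
      intro h0; have := congrArg Complex.im h0; simp at this; exact hy this
    have a2 : (y * Complex.I : ℂ) + (n + 1) ≠ 0 := by
      intro h0; have := congrArg Complex.im h0; simp at this; exact hy this
    have a3 : ((n:ℂ) + 1) ^ 2 + (y:ℂ) ^ 2 ≠ 0 := by
      have : (((n:ℝ) + 1) ^ 2 + y ^ 2) ≠ 0 := by positivity
      exact_mod_cast this
    push_cast
    rw [div_add_div _ _ a1 a2, mul_div_assoc', div_eq_div_iff (mul_ne_zero a1 a2) a3]
    linear_combination (2 * (y:ℂ) * Complex.I * (y:ℂ)^2) * Complex.I_sq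
  simp_rw [ht] at h
  rw [tsum_mul_left, ← Complex.ofReal_tsum, hcot] at h
  have hI := Complex.I_ne_zero
  have h' : ((∑' n : ℕ, y / (((n:ℝ) + 1) ^ 2 + y ^ 2) : ℝ) : ℂ)
      = ((π / 2 * coth (π * y) - 1 / (2 * y) : ℝ) : ℂ) := by
    have h3 : (1 / (y * Complex.I) : ℂ) = -Complex.I * (1 / y) := by
      field_simp; simp
    rw [h3] at h
    apply mul_left_cancel₀ (mul_ne_zero (by norm_num : (-2:ℂ) ≠ 0) hI)
    rw [← h]
    push_cast
    field_simp
    ring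
  exact_mod_cast h'

lemma integral_sin_planck {β a : ℝ} (hβ : 0 < β) (ha : a ≠ 0) :
    ∫ r in Ioi 0, sin (a * r) / (exp (β * r) - 1)
      = π / (2 * β) * coth (π * a / β) - 1 / (2 * a) := by
  have hc : ∀ n : ℕ, 0 < ((n:ℝ) + 1) * β := fun n => by positivity
  have hs := hasSum_integral_of_summable_integral_norm (μ := volume.restrict (Ioi (0:ℝ)))
    (F := fun (n : ℕ) r => exp (-(((n:ℝ) + 1) * β) * r) * sin (a * r))
    (fun n => integrable_sin_exp (hc n) a) ?_
  · have h1 : ∫ r in Ioi (0:ℝ), ∑' n : ℕ, exp (-(((n:ℝ) + 1) * β) * r) * sin (a * r)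
        = ∫ r in Ioi 0, sin (a * r) / (exp (β * r) - 1) := by
      apply setIntegral_congr_fun measurableSet_Ioi
      intro r hr
      have hr' : 0 < r := hr
      have hq : exp (-(β * r)) < 1 := by rw [Real.exp_lt_one_iff]; nlinarith [mul_pos hβ hr']
      have he : ∀ n : ℕ, exp (-(((n:ℝ) + 1) * β) * r) = exp (-(β * r)) * exp (-(β * r)) ^ n := by
        intro n
        rw [← Real.exp_nat_mul, ← Real.exp_add]; ring_nf
      simp only
      rw [tsum_mul_right]
      simp_rw [he]
      rw [tsum_mul_left, tsum_geometric_of_lt_one (exp_pos _).le hq]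
      have h4 : 1 < exp (β * r) := by rw [Real.one_lt_exp_iff]; positivity
      have h5 : exp (β * r) - 1 ≠ 0 := by linarith
      rw [Real.exp_neg] at hq ⊢
      have h6 : 1 - (exp (β * r))⁻¹ ≠ 0 := by linarith
      field_simp
    rw [← h1, ← hs.tsum_eq]
    simp_rw [integral_sin_exp (hc _) a]
    have h2 := coth_series (y := a / β) (by positivity)
    have h3 : ∀ n : ℕ, a / ((((n:ℝ) + 1) * β) ^ 2 + a ^ 2)
        = β⁻¹ * ((a / β) / (((n:ℝ) + 1) ^ 2 + (a / β) ^ 2)) := by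
      intro n
      have : (((n:ℝ) + 1) * β) ^ 2 + a ^ 2 ≠ 0 := by positivity
      have : ((n:ℝ) + 1) ^ 2 + (a / β) ^ 2 ≠ 0 := by positivity
      field_simp
    simp_rw [h3]
    rw [tsum_mul_left, h2, mul_div_assoc]
    field_simp
  · have hsum : Summable (fun n : ℕ => |a| * (1 / (((n:ℝ) + 1) * β) ^ 2)) := by
      have := ((summable_nat_add_iff 1).2 (Real.summable_one_div_nat_pow.2 one_lt_two)).mul_left
        (|a| / β ^ 2)
      refine this.congr fun n => ?_
      push_cast
      field_simp
    refine Summable.of_nonneg_of_le (fun n => integral_nonneg fun r => norm_nonneg _) 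
      (fun n => ?_) hsum
    rw [← integral_mul_exp (hc n), ← integral_const_mul]
    refine setIntegral_mono_on (integrable_sin_exp (hc n) a).norm
      ((integrable_mul_exp (hc n)).const_mul _) measurableSet_Ioi fun r hr => ?_
    have hr' : 0 < r := hr
    rw [norm_mul, Real.norm_of_nonneg (exp_pos _).le, Real.norm_eq_abs, neg_mul]
    have : |sin (a * r)| ≤ |a| * r := by
      refine Real.abs_sin_le_abs.trans ?_
      rw [abs_mul, abs_of_pos hr']
    nlinarith [exp_pos (-(((n:ℝ) + 1) * β * r))]

lemma integrable_sin_planck {β : ℝ} (hβ : 0 < β) (a : ℝ) :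
    IntegrableOn (fun r => sin (a * r) / (exp (β * r) - 1)) (Ioi 0) := by
  refine Integrable.mono' ((integrable_planck hβ).const_mul |a|)
    (Measurable.aestronglyMeasurable (by fun_prop)) ?_
  refine (ae_restrict_iff' measurableSet_Ioi).2 (.of_forall fun r hr => ?_)
  have hr' : 0 < r := hr
  have h4 : 1 < exp (β * r) := by rw [Real.one_lt_exp_iff]; positivity
  have h5 : 0 < exp (β * r) - 1 := by linarith
  rw [norm_div, Real.norm_of_nonneg h5.le, mul_div_assoc']
  gcongr
  refine Real.abs_sin_le_abs.trans ?_
  rw [abs_mul, abs_of_pos hr']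

/-- the integrand in the variables `(r, x) = (‖p‖, p₁)`, including the density -/
noncomputable def kerK (βL βR b a : ℝ) (z : ℝ × ℝ) : ℝ :=
  2 * π * (Real.cos (b * z.2 - a * z.1) / (Real.exp ((if 0 < z.2 then βL else βR) * z.1) - 1))

lemma kerK_meas (βL βR b a : ℝ) : Measurable (kerK βL βR b a) := by
  have : Measurable (fun z : ℝ × ℝ => if 0 < z.2 then βL else βR) :=
    Measurable.ite (measurableSet_lt measurable_const measurable_snd)
      measurable_const measurable_const
  unfold kerK
  fun_prop

lemma measS : MeasurableSet {z : ℝ × ℝ | |z.2| < z.1} :=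
    measurableSet_lt (by fun_prop) (by fun_prop)

lemma bound_integrable {β : ℝ} (hβ : 0 < β) :
    Integrable ({z : ℝ × ℝ | |z.2| < z.1}.indicator
      (fun z => 2 * π * (1 / (exp (β * z.1) - 1)))) (volume.prod volume) := by
  have hm : Measurable ({z : ℝ × ℝ | |z.2| < z.1}.indicator
      (fun z => 2 * π * (1 / (exp (β * z.1) - 1)))) :=
    Measurable.indicator (by fun_prop) measS
  have hslice : ∀ r : ℝ, (fun x => {z : ℝ × ℝ | |z.2| < z.1}.indicator
      (fun z => 2 * π * (1 / (exp (β * z.1) - 1))) (r, x))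
      = (Ioo (-r) r).indicator (fun _ => 2 * π * (1 / (exp (β * r) - 1))) := by
    intro r
    ext x
    simp only [indicator, mem_ofPred_eq, mem_Ioo, abs_lt]
  rw [integrable_prod_iff hm.aestronglyMeasurable]
  constructor
  · refine .of_forall fun r => ?_
    rw [hslice r, integrable_indicator_iff measurableSet_Ioo]
    exact integrableOn_const (by simp)
  · have : (fun r : ℝ => ∫ x, ‖{z : ℝ × ℝ | |z.2| < z.1}.indicator
      (fun z => 2 * π * (1 / (exp (β * z.1) - 1))) (r, x)‖)
      = (Ioi 0).indicator (fun r => 4 * π * (r / (exp (β * r) - 1))) := by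
      ext r
      have h := hslice r
      have h' : ∀ x, ‖{z : ℝ × ℝ | |z.2| < z.1}.indicator
        (fun z => 2 * π * (1 / (exp (β * z.1) - 1))) (r, x)‖
        = (Ioo (-r) r).indicator (fun _ => ‖2 * π * (1 / (exp (β * r) - 1))‖) x := by
        intro x
        rw [congrFun h x, norm_indicator_eq_indicator_norm]
      simp_rw [h']
      rw [integral_indicator measurableSet_Ioo, setIntegral_const]
      by_cases hr : 0 < r
      · have h4 : 1 < exp (β * r) := by rw [Real.one_lt_exp_iff]; positivity
        have h5 : 0 < exp (β * r) - 1 := by linarith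
        rw [indicator_of_mem (by exact hr), Real.norm_of_nonneg (by positivity), measureReal_def,
          Real.volume_Ioo, ENNReal.toReal_ofReal (by linarith), smul_eq_mul]
        ring
      · rw [indicator_of_notMem (by exact hr), Ioo_eq_empty (by linarith)]
        simp
    rw [this, integrable_indicator_iff measurableSet_Ioi]
    exact (integrable_planck hβ).const_mul _

lemma kerK_integrable {βL βR : ℝ} (hL : 0 < βL) (hR : 0 < βR) (b a : ℝ) :
    Integrable ({z : ℝ × ℝ | |z.2| < z.1}.indicator (kerK βL βR b a))
      (volume.prod volume) := by
  refine Integrable.mono' (bound_integrable (lt_min hL hR))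
    ((kerK_meas _ _ _ _).indicator measS).aestronglyMeasurable (.of_forall fun z => ?_)
  rw [norm_indicator_eq_indicator_norm]
  refine indicator_le_indicator_of_nonneg_or z
where
  indicator_le_indicator_of_nonneg_or (z : ℝ × ℝ) :
    {z : ℝ × ℝ | |z.2| < z.1}.indicator (fun z => ‖kerK βL βR b a z‖) z ≤
    {z : ℝ × ℝ | |z.2| < z.1}.indicator
      (fun z => 2 * π * (1 / (exp (min βL βR * z.1) - 1))) z := by
    by_cases hz : z ∈ {z : ℝ × ℝ | |z.2| < z.1}
    · rw [indicator_of_mem hz, indicator_of_mem hz]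
      have hz1 : 0 < z.1 := (abs_nonneg _).trans_lt hz
      have hm := lt_min hL hR
      have h4 : 1 < exp (min βL βR * z.1) := by rw [Real.one_lt_exp_iff]; positivity
      have hb : min βL βR ≤ (if 0 < z.2 then βL else βR) := by
        split_ifs
        · exact min_le_left _ _
        · exact min_le_right _ _
      have h6 : exp (min βL βR * z.1) ≤ exp ((if 0 < z.2 then βL else βR) * z.1) :=
        Real.exp_le_exp.2 (mul_le_mul_of_nonneg_right hb hz1.le)
      have h5 : 0 < exp (min βL βR * z.1) - 1 := by linarith
      have h7 : 0 < exp ((if 0 < z.2 then βL else βR) * z.1) - 1 := by linarith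
      rw [kerK, norm_mul, norm_div, Real.norm_of_nonneg (by positivity : 0 ≤ 2 * π),
        Real.norm_of_nonneg h7.le]
      gcongr
      exact abs_cos_le_one _
    · rw [indicator_of_notMem hz, indicator_of_notMem hz]

lemma integral_cos_lin {b : ℝ} (hb : b ≠ 0) (c x y : ℝ) :
    ∫ t in x..y, cos (b * t - c) = (sin (b * y - c) - sin (b * x - c)) / b := by
  rw [intervalIntegral.integral_comp_mul_sub (fun t => cos t) hb, integral_cos, smul_eq_mul]
  field_simp

lemma kerK_integral {βL βR b a : ℝ} (hL : 0 < βL) (hR : 0 < βR) (hb : b ≠ 0) (ha : a ≠ 0)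
    (h1 : a + b ≠ 0) (h2 : a - b ≠ 0) :
    ∫ z, {z : ℝ × ℝ | |z.2| < z.1}.indicator (kerK βL βR b a) z
      = 2 * π / b * (((π / (2 * βR) * coth (π * (a + b) / βR) - 1 / (2 * (a + b)))
          - (π / (2 * βR) * coth (π * a / βR) - 1 / (2 * a)))
        + ((π / (2 * βL) * coth (π * a / βL) - 1 / (2 * a))
          - (π / (2 * βL) * coth (π * (a - b) / βL) - 1 / (2 * (a - b))))) := by
  rw [Measure.volume_eq_prod, integral_prod _ (kerK_integrable hL hR b a)]
  have hin : (fun r : ℝ => ∫ x, {z : ℝ × ℝ | |z.2| < z.1}.indicator (kerK βL βR b a) (r, x))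
      = (Ioi 0).indicator (fun r => 2 * π / b * (
        (sin ((a + b) * r) / (exp (βR * r) - 1) - sin (a * r) / (exp (βR * r) - 1))
        + (sin (a * r) / (exp (βL * r) - 1) - sin ((a - b) * r) / (exp (βL * r) - 1)))) := by
    ext r
    have hsl : (fun x => {z : ℝ × ℝ | |z.2| < z.1}.indicator (kerK βL βR b a) (r, x))
        = (Ioo (-r) r).indicator (fun x => kerK βL βR b a (r, x)) := by
      ext x
      simp only [indicator, mem_ofPred_eq, mem_Ioo, abs_lt]
    rw [hsl, integral_indicator measurableSet_Ioo]
    by_cases hr : 0 < r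
    · rw [indicator_of_mem (by exact hr), ← integral_Ioc_eq_integral_Ioo,
        ← intervalIntegral.integral_of_le (by linarith)]
      have c1 : ∀ x ∈ uIoc (-r) 0, 2 * π / (exp (βR * r) - 1) * cos (b * x - a * r)
          = kerK βL βR b a (r, x) := by
        intro x hx
        rw [uIoc_of_le (by linarith)] at hx
        simp only [kerK, if_neg (not_lt.2 hx.2)]
        ring
      have c2 : ∀ x ∈ uIoc 0 r, 2 * π / (exp (βL * r) - 1) * cos (b * x - a * r)
          = kerK βL βR b a (r, x) := by
        intro x hx
        rw [uIoc_of_le hr.le] at hx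
        simp only [kerK, if_pos hx.1]
        ring
      have i1 : IntervalIntegrable (fun x => kerK βL βR b a (r, x)) volume (-r) 0 :=
        (Continuous.intervalIntegrable (by fun_prop) _ _).congr c1
      have i2 : IntervalIntegrable (fun x => kerK βL βR b a (r, x)) volume 0 r :=
        (Continuous.intervalIntegrable (by fun_prop) _ _).congr c2
      rw [← intervalIntegral.integral_add_adjacent_intervals i1 i2,
        ← intervalIntegral.integral_congr_ae (.of_forall c1),
        ← intervalIntegral.integral_congr_ae (.of_forall c2),
        intervalIntegral.integral_const_mul, intervalIntegral.integral_const_mul,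
        integral_cos_lin hb, integral_cos_lin hb,
        show b * 0 - a * r = -(a * r) by ring,
        show b * -r - a * r = -((a + b) * r) by ring,
        show b * r - a * r = -((a - b) * r) by ring, sin_neg, sin_neg, sin_neg]
      ring
    · rw [indicator_of_notMem (by exact hr), Ioo_eq_empty (by linarith)]
      simp
  rw [hin, integral_indicator measurableSet_Ioi, integral_const_mul, integral_add,
    integral_sub, integral_sub, integral_sin_planck hR h1, integral_sin_planck hR ha,
    integral_sin_planck hL ha, integral_sin_planck hL h2]
  all_goals first
    | exact integrable_sin_planck hR _
    | exact integrable_sin_planck hL _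
    | exact (integrable_sin_planck hR _).sub (integrable_sin_planck hR _)
    | exact (integrable_sin_planck hL _).sub (integrable_sin_planck hL _)

/-- The vacuum-subtracted NESS two-point function pulled back along the
inertial worldline of a detector moving with velocity `v`: with `γ = 1/√(1−v²)`,
`d₊ = γ(1+v)`, `d₋ = γ(1−v)` and `𝛃(p₁) = β_L` for `p₁ > 0`, `β_R` for `p₁ < 0`, for
`s ≠ 0` the integrand is integrable on `ℝ³` and
`(2π)^{-3} ∫_{ℝ³} (1/‖p‖)·cos(p₁γvs − ‖p‖γs)/(e^{𝛃(p₁)‖p‖} − 1) dp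
  = 1/(4π²s²) + (1/(8πγvβ_R s))·[coth(πs/(β_R d₋)) − coth(πγs/β_R)]
    − (1/(8πγvβ_L s))·[coth(πs/(β_L d₊)) − coth(πγs/β_L)]`. -/
theorem stmt10 (βL βR v s γ dp dm : ℝ) (hL : 0 < βL) (hR : 0 < βR)
    (hv1 : -1 < v) (hv2 : v < 1) (hv0 : v ≠ 0) (hs : s ≠ 0)
    (hγ : γ = 1 / Real.sqrt (1 - v ^ 2))
    (hdp : dp = γ * (1 + v)) (hdm : dm = γ * (1 - v)) :
    Integrable (fun p : EuclideanSpace ℝ (Fin 3) =>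
      (1 / ‖p‖) * Real.cos (p 0 * γ * v * s - ‖p‖ * γ * s) /
        (Real.exp ((if 0 < p 0 then βL else βR) * ‖p‖) - 1)) ∧
    ((2 * π) ^ 3)⁻¹ * ∫ p : EuclideanSpace ℝ (Fin 3),
        (1 / ‖p‖) * Real.cos (p 0 * γ * v * s - ‖p‖ * γ * s) /
          (Real.exp ((if 0 < p 0 then βL else βR) * ‖p‖) - 1)
      = 1 / (4 * π ^ 2 * s ^ 2)
        + (1 / (8 * π * γ * v * βR * s)) *
            (coth (π * s / (βR * dm)) - coth (π * γ * s / βR))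
        - (1 / (8 * π * γ * v * βL * s)) *
            (coth (π * s / (βL * dp)) - coth (π * γ * s / βL)) := by
  have hv : 0 < 1 - v ^ 2 := by nlinarith
  have hγ0 : 0 < γ := by rw [hγ]; positivity
  have hγ2 : γ ^ 2 * (1 - v ^ 2) = 1 := by
    rw [hγ, div_pow, Real.sq_sqrt hv.le]; field_simp
  have ha : γ * s ≠ 0 := mul_ne_zero hγ0.ne' hs
  have hb : γ * v * s ≠ 0 := mul_ne_zero (mul_ne_zero hγ0.ne' hv0) hs
  have hvp : 1 + v ≠ 0 := by linarith
  have hvm : 1 - v ≠ 0 := by linarith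
  have h1 : γ * s + γ * v * s ≠ 0 := by
    rw [show γ * s + γ * v * s = γ * s * (1 + v) by ring]; exact mul_ne_zero ha hvp
  have h2 : γ * s - γ * v * s ≠ 0 := by
    rw [show γ * s - γ * v * s = γ * s * (1 - v) by ring]; exact mul_ne_zero ha hvm
  set F : ℝ × ℝ → ℝ := fun z => (1 / z.1) * Real.cos (z.2 * γ * v * s - z.1 * γ * s) /
        (Real.exp ((if 0 < z.2 then βL else βR) * z.1) - 1) with hF
  have hmite : Measurable (fun z : ℝ × ℝ => if 0 < z.2 then βL else βR) :=
    Measurable.ite (measurableSet_lt measurable_const measurable_snd)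
      measurable_const measurable_const
  have hFm : Measurable F := by rw [hF]; fun_prop
  have hφ : Measurable (fun p : EuclideanSpace ℝ (Fin 3) => (‖p‖, p 0)) := by fun_prop
  have hdm' : Measurable (fun z : ℝ × ℝ => ENNReal.ofReal (2 * π * z.1)) := by fun_prop
  have hfin : ∀ᵐ z ∂(volume.restrict {z : ℝ × ℝ | |z.2| < z.1}),
      ENNReal.ofReal (2 * π * z.1) < ⊤ := .of_forall fun z => ENNReal.ofReal_lt_top
  have hK : ∀ z ∈ {z : ℝ × ℝ | |z.2| < z.1},
      (ENNReal.ofReal (2 * π * z.1)).toReal • F z = kerK βL βR (γ * v * s) (γ * s) z := by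
    intro z hz
    have hz1 : 0 < z.1 := (abs_nonneg _).trans_lt hz
    rw [ENNReal.toReal_ofReal (by positivity), smul_eq_mul, hF, kerK]
    simp only
    rw [show z.2 * γ * v * s - z.1 * γ * s = γ * v * s * z.2 - γ * s * z.1 by ring]
    field_simp
  constructor
  · have : Integrable F ((volume : Measure (EuclideanSpace ℝ (Fin 3))).map
        (fun p => (‖p‖, p 0))) := by
      rw [map_ball, integrable_withDensity_iff_integrable_smul' hdm' hfin]
      refine IntegrableOn.congr_fun (f := kerK βL βR (γ * v * s) (γ * s)) ?_
        (fun z hz => (hK z hz).symm) measS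
      exact (integrable_indicator_iff measS).1 (kerK_integrable hL hR _ _)
    exact (integrable_map_measure hFm.aestronglyMeasurable hφ.aemeasurable).1 this
  · have hint : ∫ p : EuclideanSpace ℝ (Fin 3), F (‖p‖, p 0)
        = ∫ z, {z : ℝ × ℝ | |z.2| < z.1}.indicator (kerK βL βR (γ * v * s) (γ * s)) z := by
      rw [← integral_map hφ.aemeasurable hFm.aestronglyMeasurable, map_ball,
        integral_withDensity_eq_integral_toReal_smul hdm' hfin,
        setIntegral_congr_fun measS hK, integral_indicator measS]
    have hint' := hint.trans (kerK_integral hL hR hb ha h1 h2)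
    simp only [hF] at hint'
    rw [hint']
    have e1 : π * s / (βR * dm) = π * (γ * s + γ * v * s) / βR := by
      rw [hdm, div_eq_div_iff (by positivity) hR.ne']
      linear_combination (-π * s * βR) * hγ2
    have e2 : π * s / (βL * dp) = π * (γ * s - γ * v * s) / βL := by
      rw [hdp, div_eq_div_iff (by positivity) hL.ne']
      linear_combination (-π * s * βL) * hγ2
    rw [e1, e2, ← mul_assoc π γ s]
    have e3 : 1 / (2 * (γ * s - γ * v * s)) - 1 / (2 * (γ * s + γ * v * s)) = γ * v / s := by
      rw [div_sub_div _ _ (by simpa using h2) (by simpa using h1),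
        div_eq_div_iff (by simpa using ⟨h2, h1⟩) hs]
      linear_combination (-4 * γ * v * s ^ 2) * hγ2
    generalize coth (π * (γ * s + γ * v * s) / βR) = c1
    generalize coth (π * (γ * s - γ * v * s) / βL) = c2
    generalize coth (π * γ * s / βR) = c3
    generalize coth (π * γ * s / βL) = c4
    have e4 : ((π / (2 * βR) * c1 - 1 / (2 * (γ * s + γ * v * s)))
          - (π / (2 * βR) * c3 - 1 / (2 * (γ * s))))
        + ((π / (2 * βL) * c4 - 1 / (2 * (γ * s)))
          - (π / (2 * βL) * c2 - 1 / (2 * (γ * s - γ * v * s))))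
        = γ * v / s + π / (2 * βR) * (c1 - c3) - π / (2 * βL) * (c2 - c4) := by
      linear_combination e3
    rw [e4]
    have := hγ0.ne'
    field_simp
    ring
end
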